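/- arXiv:math/0307140 — 7 statements merged into one kernel-verified Lean document; each statement's English description precedes it below -/
import Mathlib

section
/- Let μ be a finite positive Borel measure on ℝ with Lebesgue decomposition μ = μ_s + z·Leb, let ẑ be a symmetric rearrangement of z, and let v̂ be the odd rearrangement of μ. Then for every x > 0, v̂(x) = (1/2)·sup{μ(A) : A ⊆ ℝ Borel, Leb(A) ≤ 2x}. (Formula (2.5) of Proposition 1.) -/
open MeasureTheory Set Filter
open scoped ENNReal

noncomputable section

/-- `waveSup μ s = sup { μ(A) : A ⊆ ℝ Borel, Leb(A) ≤ s }`. -/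
def waveSup (μ : Measure ℝ) (s : ℝ) : ℝ≥0∞ :=
  ⨆ (A : Set ℝ) (_ : MeasurableSet A) (_ : volume A ≤ ENNReal.ofReal s), μ A

/-!
By the layer-cake formula, `∫_A f dν = ∫_{c > 0} ν({f > c} ∩ A) dc`, and if `ν A ≤ t` the
integrand is at most `min t (ν {f > c})`. For finite `ν` this bound is attained simultaneously for
all `c` by a superlevel set of `f`, cut inside one level set so as to have measure exactly `t`; such
a cut exists because `ν` has no atoms. The σ-finite case follows by exhaustion. So the supremum of
`∫_A f` over `ν A ≤ t` depends only on the distribution function of `f`. The superlevel sets of a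
symmetric rearrangement `g` are centred intervals up to null sets, which gives the same expression
for `2 ∫ y in 0..x, g y` with `t = 2 * x`. The singular part adds its full mass, as it sits on a
null set.
-/

theorem exists_measure_Ioi_le_le_measure_Ici (ρ : Measure ℝ) [IsFiniteMeasure ρ] {t : ℝ≥0∞}
    (ht₀ : t ≠ 0) (ht : t < ρ univ) : ∃ c, ρ (Ioi c) ≤ t ∧ t ≤ ρ (Ici c) := by
  set S : Set ℝ := {c | ρ (Ioi c) ≤ t}
  have hS_nonempty : S.Nonempty := by
    have hinter : ⋂ c : ℝ, Ioi c = ∅ :=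
      eq_empty_of_forall_notMem fun y hy => lt_irrefl y (mem_iInter.1 hy y)
    have hlim : Tendsto (fun c => ρ (Ioi c)) atTop (nhds 0) := by
      simpa [hinter, Function.comp_def] using tendsto_measure_iInter_atTop (μ := ρ)
        (fun c => measurableSet_Ioi.nullMeasurableSet) antitone_Ioi ⟨0, measure_ne_top ρ (Ioi 0)⟩
    exact (hlim.eventually (ge_mem_nhds (pos_iff_ne_zero.2 ht₀))).exists
  have hS_bddBelow : BddBelow S := by
    obtain ⟨b, hb⟩ := ((tendsto_measure_Ici_atBot ρ).eventually (lt_mem_nhds ht)).exists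
    refine ⟨b, fun c hc => ?_⟩
    by_contra! hcb
    exact (hb.trans_le (measure_mono (Ici_subset_Ioi.2 hcb))).not_ge hc
  refine ⟨sInf S, ?_, ?_⟩
  · obtain ⟨u, hu_anti, hu_lim, hu_mem⟩ := exists_seq_tendsto_sInf hS_nonempty hS_bddBelow
    have hmono : Monotone fun n => Ioi (u n) := antitone_Ioi.comp hu_anti
    rw [← (isGLB_of_tendsto_atTop hu_anti hu_lim).iUnion_Ioi_eq, hmono.measure_iUnion]
    exact iSup_le hu_mem
  · obtain ⟨u, hu_mono, hu_lt, hu_lim⟩ := exists_seq_strictMono_tendsto (sInf S)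
    have hinter : ⋂ n, Ici (u n) = Ici (sInf S) := by
      rw [← (isLUB_of_tendsto_atTop hu_mono.monotone hu_lim).upperBounds_eq]
      ext y
      simp [mem_upperBounds]
    have hanti : Antitone fun n => Ici (u n) := antitone_Ici.comp_monotone hu_mono.monotone
    rw [← hinter, hanti.measure_iInter (fun n => measurableSet_Ici.nullMeasurableSet)
      ⟨0, measure_ne_top ρ _⟩]
    refine le_iInf fun n => ?_
    have hn : t < ρ (Ioi (u n)) := not_le.1 fun h => (csInf_le hS_bddBelow h).not_gt (hu_lt n)
    exact hn.le.trans (measure_mono Ioi_subset_Ici_self)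

section

variable {α : Type*} [MeasurableSpace α]

theorem exists_measurableSet_measure_eq [MeasurableSpace.CountablySeparated α] (ν : Measure α)
    [IsFiniteMeasure ν] [NullSingletonClass ν] {t : ℝ≥0∞} (ht : t ≤ ν univ) :
    ∃ A, MeasurableSet A ∧ ν A = t := by
  rcases eq_or_ne t 0 with rfl | ht₀
  · exact ⟨∅, .empty, measure_empty⟩
  rcases ht.eq_or_lt with rfl | ht
  · exact ⟨univ, .univ, rfl⟩
  obtain ⟨g, hg, hg_inj⟩ := MeasurableSpace.measurable_injection_nat_bool_of_countablySeparated α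
  have he := measurableEmbedding_embeddingReal (ℕ → Bool)
  set e : α → ℝ := embeddingReal (ℕ → Bool) ∘ g
  have he_meas : Measurable e := he.measurable.comp hg
  have he_inj : e.Injective := he.injective.comp hg_inj
  obtain ⟨c, hc_Ioi, hc_Ici⟩ := exists_measure_Ioi_le_le_measure_Ici (ν.map e) ht₀
    (by rwa [Measure.map_apply he_meas .univ])
  rw [Measure.map_apply he_meas measurableSet_Ioi] at hc_Ioi
  rw [Measure.map_apply he_meas measurableSet_Ici, ← Ioi_union_left, preimage_union] at hc_Ici
  have hnull : ν (e ⁻¹' {c}) = 0 := (subsingleton_singleton.preimage he_inj).measure_zero ν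
  refine ⟨e ⁻¹' Ioi c, he_meas measurableSet_Ioi, hc_Ioi.antisymm (hc_Ici.trans ?_)⟩
  exact (measure_union_le _ _).trans_eq (by rw [hnull, add_zero])

theorem exists_measurableSet_between_measure_eq [MeasurableSpace.CountablySeparated α]
    (ν : Measure α) [IsFiniteMeasure ν] [NullSingletonClass ν] {S T : Set α} (hS : MeasurableSet S)
    (hT : MeasurableSet T) (hST : S ⊆ T) {t : ℝ≥0∞} (hSt : ν S ≤ t) (htT : t ≤ ν T) :
    ∃ A, MeasurableSet A ∧ S ⊆ A ∧ A ⊆ T ∧ ν A = t := by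
  have hgap : t - ν S ≤ ν.restrict (T \ S) univ := by
    rw [Measure.restrict_apply_univ]
    exact (tsub_le_tsub_right htT _).trans le_measure_sdiff
  obtain ⟨B, hB, hB_measure⟩ := exists_measurableSet_measure_eq (ν.restrict (T \ S)) hgap
  rw [Measure.restrict_apply hB] at hB_measure
  have hB_gap : MeasurableSet (B ∩ (T \ S)) := hB.inter (hT.diff hS)
  refine ⟨S ∪ B ∩ (T \ S), hS.union hB_gap, subset_union_left,
    union_subset hST (inter_subset_right.trans sdiff_subset), ?_⟩
  rw [measure_union (disjoint_sdiff_right.mono_right inter_subset_right) hB_gap, hB_measure,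
    add_tsub_cancel_of_le hSt]

theorem exists_measurableSet_superlevel_inter_eq_min [MeasurableSpace.CountablySeparated α]
    (ν : Measure α) [IsFiniteMeasure ν] [NullSingletonClass ν] {f : α → ℝ} (hf : AEMeasurable f ν)
    (t : ℝ≥0∞) :
    ∃ A, MeasurableSet A ∧ ν A ≤ t ∧
      ∀ c, ν ({y | c < f y} ∩ A) = min t (ν {y | c < f y}) := by
  wlog hf_meas : Measurable f generalizing f
  · obtain ⟨A, hA, hAt, hA_min⟩ := this hf.measurable_mk.aemeasurable hf.measurable_mk
    have hcongr : ∀ c, {y | c < f y} =ᵐ[ν] {y | c < hf.mk f y} := fun c => by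
      filter_upwards [hf.ae_eq_mk] with y hy
      exact congrArg (c < ·) hy
    refine ⟨A, hA, hAt, fun c => ?_⟩
    rw [measure_congr ((hcongr c).inter (ae_eq_refl A)), measure_congr (hcongr c), hA_min]
  rcases eq_or_ne t 0 with rfl | ht₀
  · exact ⟨∅, .empty, by simp, by simp⟩
  rcases le_or_gt (ν univ) t with ht | ht
  · refine ⟨univ, .univ, ht, fun c => ?_⟩
    rw [inter_univ, min_eq_right ((measure_mono (subset_univ _)).trans ht)]
  obtain ⟨c₀, hlt, hle⟩ := exists_measure_Ioi_le_le_measure_Ici (ν.map f) ht₀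
    (by rwa [Measure.map_apply hf_meas .univ])
  rw [Measure.map_apply hf_meas measurableSet_Ioi] at hlt
  rw [Measure.map_apply hf_meas measurableSet_Ici] at hle
  obtain ⟨A, hA, hsubA, hAsub, hAt⟩ := exists_measurableSet_between_measure_eq ν
    (hf_meas measurableSet_Ioi) (hf_meas measurableSet_Ici) (preimage_mono Ioi_subset_Ici_self)
    hlt hle
  refine ⟨A, hA, hAt.le, fun c => ?_⟩
  rcases lt_or_ge c c₀ with hc | hc
  · have hsub : A ⊆ {y | c < f y} := fun y hy => hc.trans_le (hAsub hy)
    rw [inter_eq_right.2 hsub, hAt, min_eq_left (hAt.ge.trans (measure_mono hsub))]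
  · have hsub : {y | c < f y} ⊆ f ⁻¹' Ioi c₀ := fun y hy => hc.trans_lt hy
    rw [inter_eq_left.2 (hsub.trans hsubA), min_eq_right ((measure_mono hsub).trans hlt)]

theorem setLIntegral_ofReal_eq_lintegral_superlevel_inter {ν : Measure α} {f : α → ℝ} {A : Set α}
    (hf : AEMeasurable f (ν.restrict A)) (hf₀ : 0 ≤ᵐ[ν.restrict A] f) (hA : MeasurableSet A) :
    ∫⁻ y in A, ENNReal.ofReal (f y) ∂ν = ∫⁻ c in Ioi 0, ν ({y | c < f y} ∩ A) := by
  simp_rw [lintegral_eq_lintegral_meas_lt _ hf₀ hf, Measure.restrict_apply' hA]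

theorem lintegral_min_superlevel_eq_iSup_spanningSets (ν : Measure α) [SigmaFinite ν] (f : α → ℝ)
    (t : ℝ≥0∞) :
    ∫⁻ c in Ioi 0, min t (ν {y | c < f y}) =
      ⨆ n, ∫⁻ c in Ioi 0, min t (ν ({y | c < f y} ∩ spanningSets ν n)) := by
  have hmono : ∀ s : Set α, Monotone fun n => s ∩ spanningSets ν n := fun s =>
    monotone_const.inter (monotone_spanningSets ν)
  have hanti : ∀ n, Antitone fun c => min t (ν ({y | c < f y} ∩ spanningSets ν n)) := by
    intro n c d hcd
    have hsub : {y | d < f y} ⊆ {y | c < f y} := fun y hy => hcd.trans_lt hy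
    exact min_le_min_left t (measure_mono (inter_subset_inter_left _ hsub))
  rw [← lintegral_iSup (fun n => (hanti n).measurable) fun m n hmn c =>
    min_le_min_left t (measure_mono (hmono _ hmn))]
  refine lintegral_congr fun c => ?_
  rw [← inf_iSup_eq, ← (hmono _).measure_iUnion, ← inter_iUnion, iUnion_spanningSets, inter_univ]

theorem iSup_setLIntegral_ofReal_eq_lintegral_min_superlevel
    [MeasurableSpace.CountablySeparated α] (ν : Measure α) [SigmaFinite ν] [NullSingletonClass ν]
    {f : α → ℝ} (hf : AEMeasurable f ν) (hf₀ : 0 ≤ᵐ[ν] f) (t : ℝ≥0∞) :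
    ⨆ (A : Set α) (_ : MeasurableSet A) (_ : ν A ≤ t), ∫⁻ y in A, ENNReal.ofReal (f y) ∂ν =
      ∫⁻ c in Ioi 0, min t (ν {y | c < f y}) := by
  have hcake : ∀ A, MeasurableSet A →
      ∫⁻ y in A, ENNReal.ofReal (f y) ∂ν = ∫⁻ c in Ioi 0, ν ({y | c < f y} ∩ A) := fun A hA =>
    setLIntegral_ofReal_eq_lintegral_superlevel_inter hf.restrict (ae_restrict_of_ae hf₀) hA
  apply le_antisymm
  · refine iSup₂_le fun A hA => iSup_le fun hAt => ?_
    rw [hcake A hA]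
    gcongr with c
    exact le_min ((measure_mono inter_subset_right).trans hAt) (measure_mono inter_subset_left)
  · rw [lintegral_min_superlevel_eq_iSup_spanningSets]
    refine iSup_le fun n => ?_
    have hS := measurableSet_spanningSets ν n
    have : IsFiniteMeasure (ν.restrict (spanningSets ν n)) :=
      isFiniteMeasure_restrict.2 (measure_spanningSets_lt_top ν n).ne
    obtain ⟨A, hA, hAt, hA_min⟩ :=
      exists_measurableSet_superlevel_inter_eq_min (ν.restrict (spanningSets ν n)) hf.restrict t
    simp only [Measure.restrict_apply' hS, inter_assoc] at hAt hA_min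
    refine le_iSup₂_of_le (A ∩ spanningSets ν n) (hA.inter hS) (le_iSup_of_le hAt ?_)
    simp only [hcake _ (hA.inter hS), hA_min, le_refl]

end

theorem waveSup_ne_top (μ : Measure ℝ) [IsFiniteMeasure μ] (s : ℝ) : waveSup μ s ≠ ∞ :=
  ne_top_of_le_ne_top (measure_ne_top μ univ)
    (iSup₂_le fun A _ => iSup_le fun _ => measure_mono (subset_univ A))

theorem waveSup_add_of_mutuallySingular {μs : Measure ℝ} (hsing : μs ⟂ₘ volume) (μ : Measure ℝ)
    (s : ℝ) : waveSup (μs + μ) s = μs univ + waveSup μ s := by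
  apply le_antisymm
  · refine iSup₂_le fun A hA => iSup_le fun hAs => ?_
    exact add_le_add (measure_mono (subset_univ A))
      (le_iSup₂_of_le A hA (le_iSup_of_le hAs le_rfl))
  · obtain ⟨N, hN, hμs, hvol⟩ := hsing
    simp only [waveSup, iSup_and']
    rw [ENNReal.add_biSup' ⟨∅, .empty, by simp⟩]
    refine iSup₂_le fun A ⟨hA, hAs⟩ => ?_
    have hAN : volume (A ∪ Nᶜ) ≤ ENNReal.ofReal s :=
      (measure_union_le _ _).trans (by rwa [hvol, add_zero])
    refine le_iSup₂_of_le (A ∪ Nᶜ) ⟨hA.union hN.compl, hAN⟩ (add_le_add ?_ ?_)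
    · rw [← measure_add_measure_compl hN, hμs, zero_add]
      exact measure_mono subset_union_right
    · exact measure_mono subset_union_left

theorem waveSup_withDensity_eq_lintegral_min {z : ℝ → ℝ} (hz : AEMeasurable z)
    (hz₀ : 0 ≤ᵐ[volume] z) (s : ℝ) :
    waveSup (volume.withDensity fun y => ENNReal.ofReal (z y)) s =
      ∫⁻ c in Ioi 0, min (ENNReal.ofReal s) (volume {y | c < z y}) := by
  rw [← iSup_setLIntegral_ofReal_eq_lintegral_min_superlevel volume hz hz₀]
  exact iSup_congr fun A => iSup_congr fun hA => by rw [withDensity_apply _ hA]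

/-- `g` is a symmetric rearrangement of `z`: an even nonnegative function, nonincreasing on
`(0, ∞)`, that is equimeasurable with `z` at positive heights. The values of `g` at the origin and
at its jumps are not determined by `z`, so this is a predicate rather than an operation on `z`. -/
structure IsSymmetricRearrangement (g z : ℝ → ℝ) : Prop where
  even : ∀ x, g (-x) = g x
  nonneg : ∀ x, 0 ≤ g x
  antitoneOn : AntitoneOn g (Ioi 0)
  volume_superlevel : ∀ c > 0, volume {x | c < g x} = volume {x | c < z x}

theorem volume_eq_two_mul_inter_Ioi {S : Set ℝ} (hS : ∀ y, -y ∈ S ↔ y ∈ S) :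
    volume S = 2 * volume (S ∩ Ioi 0) := by
  have hneg : volume (S ∩ Iio 0) = volume (S ∩ Ioi 0) := by
    rw [← Measure.measure_neg volume (S ∩ Ioi 0)]
    congr 1
    ext y
    simp [hS]
  have hdiff : volume (S \ Ioi 0) = volume (S ∩ Iio 0) := by
    rw [sdiff_eq, compl_Ioi]
    exact measure_congr ((ae_eq_refl S).inter Iio_ae_eq_Iic.symm)
  rw [← measure_inter_add_sdiff S (measurableSet_Ioi (a := (0 : ℝ))), hdiff, hneg, two_mul]

theorem volume_inter_Ioc_eq_min {S : Set ℝ} {a : ℝ} (hS : ∀ ⦃y b⦄, a < y → y ≤ b → b ∈ S → y ∈ S)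
    (x : ℝ) : volume (S ∩ Ioc a x) = min (ENNReal.ofReal (x - a)) (volume (S ∩ Ioi a)) := by
  rw [← Real.volume_Ioc]
  by_cases hsub : Ioc a x ⊆ S
  · rw [inter_eq_right.2 hsub, min_eq_left]
    exact measure_mono (subset_inter hsub Ioc_subset_Ioi_self)
  · obtain ⟨y, hy, hyS⟩ := not_subset.1 hsub
    have heq : S ∩ Ioi a = S ∩ Ioc a x := by
      refine Subset.antisymm (fun b hb => ⟨hb.1, hb.2, ?_⟩)
        (inter_subset_inter_right S Ioc_subset_Ioi_self)
      by_contra! hxb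
      exact hyS (hS hy.1 (hy.2.trans hxb.le) hb.1)
    rw [heq, min_eq_right (measure_mono inter_subset_right)]

namespace IsSymmetricRearrangement

variable {g z : ℝ → ℝ}

theorem aemeasurable_restrict_Ioc (h : IsSymmetricRearrangement g z) (x : ℝ) :
    AEMeasurable g (volume.restrict (Ioc 0 x)) :=
  aemeasurable_restrict_of_antitoneOn measurableSet_Ioc (h.antitoneOn.mono Ioc_subset_Ioi_self)

theorem two_mul_volume_superlevel_inter_Ioc (h : IsSymmetricRearrangement g z) {c : ℝ}
    (hc : 0 < c) (x : ℝ) :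
    2 * volume ({y | c < g y} ∩ Ioc 0 x) =
      min (ENNReal.ofReal (2 * x)) (volume {y | c < z y}) := by
  have hlower : ∀ ⦃y b⦄, 0 < y → y ≤ b → b ∈ {y | c < g y} → y ∈ {y | c < g y} :=
    fun y b hy hyb hb => lt_of_lt_of_le hb (h.antitoneOn hy (hy.trans_le hyb) hyb)
  rw [← h.volume_superlevel c hc, volume_eq_two_mul_inter_Ioi (S := {y | c < g y}) fun y => by
    simp [h.even], volume_inter_Ioc_eq_min hlower, sub_zero, ENNReal.ofReal_mul zero_le_two,
    ENNReal.ofReal_ofNat, mul_min]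

theorem waveSup_withDensity_eq_two_mul_setLIntegral (h : IsSymmetricRearrangement g z)
    (hz : AEMeasurable z) (hz₀ : 0 ≤ᵐ[volume] z) (x : ℝ) :
    waveSup (volume.withDensity fun y => ENNReal.ofReal (z y)) (2 * x) =
      2 * ∫⁻ y in Ioc 0 x, ENNReal.ofReal (g y) := by
  rw [waveSup_withDensity_eq_lintegral_min hz hz₀, setLIntegral_ofReal_eq_lintegral_superlevel_inter
    (h.aemeasurable_restrict_Ioc x) (.of_forall h.nonneg) measurableSet_Ioc,
    ← lintegral_const_mul' _ _ ENNReal.ofNat_ne_top]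
  exact setLIntegral_congr_fun measurableSet_Ioi fun c hc =>
    (h.two_mul_volume_superlevel_inter_Ioc hc x).symm

theorem intervalIntegral_eq_toReal_lintegral (h : IsSymmetricRearrangement g z) {x : ℝ}
    (hx : 0 ≤ x) : ∫ y in 0..x, g y = (∫⁻ y in Ioc 0 x, ENNReal.ofReal (g y)).toReal := by
  rw [intervalIntegral.integral_of_le hx, integral_eq_lintegral_of_nonneg_ae
    (.of_forall h.nonneg) (h.aemeasurable_restrict_Ioc x).aestronglyMeasurable]

end IsSymmetricRearrangement

theorem odd_rearrangement_formula_general {μs : Measure ℝ} (hsing : μs ⟂ₘ volume) {z zhat : ℝ → ℝ}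
    (hz : AEMeasurable z) (hz₀ : 0 ≤ᵐ[volume] z) (hzhat : IsSymmetricRearrangement zhat z)
    {x : ℝ} (hx : 0 ≤ x)
    (hfin : waveSup (μs + volume.withDensity fun y => ENNReal.ofReal (z y)) (2 * x) ≠ ∞) :
    (μs univ).toReal / 2 + ∫ y in 0..x, zhat y =
      (waveSup (μs + volume.withDensity fun y => ENNReal.ofReal (z y)) (2 * x)).toReal / 2 := by
  rw [waveSup_add_of_mutuallySingular hsing,
    hzhat.waveSup_withDensity_eq_two_mul_setLIntegral hz hz₀] at hfin ⊢
  obtain ⟨hμs, hint⟩ := ENNReal.add_ne_top.1 hfin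
  rw [ENNReal.toReal_add hμs hint, ENNReal.toReal_mul, ENNReal.toReal_ofNat,
    hzhat.intervalIntegral_eq_toReal_lintegral hx]
  ring

/-- Formula (2.5) of Proposition 1: for a finite positive Borel measure `μ` on `ℝ` with
Lebesgue decomposition `μ = μs + z·Leb`, a symmetric rearrangement `zhat` of `z` and the
odd rearrangement `vhat` of `μ`, one has
`vhat x = (1/2) · sup { μ(A) : Leb(A) ≤ 2x }` for every `x > 0`. -/
theorem odd_rearrangement_formula
    (μ μs : Measure ℝ) [IsFiniteMeasure μ] [IsFiniteMeasure μs]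
    (z : ℝ → ℝ) (hz_int : Integrable z) (hz_nonneg : ∀ x, 0 ≤ z x)
    (hsing : μs ⟂ₘ volume)
    (hdecomp : μ = μs + volume.withDensity (fun x => ENNReal.ofReal (z x)))
    (zhat : ℝ → ℝ)
    (hzhat_even : ∀ x, zhat (-x) = zhat x)
    (hzhat_nonneg : ∀ x, 0 ≤ zhat x)
    (hzhat_anti : AntitoneOn zhat (Set.Ioi 0))
    (hzhat_rearr : ∀ c > 0, volume {x | c < zhat x} = volume {x | c < z x})
    (vhat : ℝ → ℝ)
    (hvhat_odd : ∀ x, vhat (-x) = -vhat x)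
    (hvhat_pos : ∀ x > 0, vhat x = (μs Set.univ).toReal / 2 + ∫ y in (0:ℝ)..x, zhat y) :
    ∀ x > 0, vhat x = (waveSup μ (2 * x)).toReal / 2 := by
  intro x hx
  rw [hvhat_pos x hx, hdecomp]
  exact odd_rearrangement_formula_general hsing hz_int.aemeasurable (.of_forall hz_nonneg)
    ⟨hzhat_even, hzhat_nonneg, hzhat_anti, hzhat_rearr⟩ hx.le (hdecomp ▸ waveSup_ne_top μ (2 * x))
end
end

section
/- Let μ be a finite positive Borel measure on ℝ, let v̂ be the odd rearrangement of μ, and let ν̂ be the Lebesgue–Stieltjes measure associated with (the right-continuous modification of) v̂, so that in particular ν̂({0}) = μ_s(ℝ). Then μ ⪯ ν̂ and ν̂ ⪯ μ; equivalently, for every s > 0, sup{μ(A) : A ⊆ ℝ Borel, Leb(A) ≤ s} = sup{ν̂(B) : B ⊆ ℝ Borel, Leb(B) ≤ s}. (Part of Proposition 1.) -/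
/-!
By the bathtub principle and the layer cake formula, the largest mass `∫ x in A, f x` carried by a
set `A` of Lebesgue measure at most `s` is `∫ min s |{f > c}| dc` over `c > 0`, so it depends only
on the distribution of `f`. A singular part adds its whole mass to this supremum, since it lives on
a Lebesgue null set. The Stieltjes measure of `vhat` is `μs(ℝ) δ₀ + zhat · Leb`, whose singular part
has the mass of `μs` and whose density has the distribution of `z`.
-/

open MeasureTheory Set Filter
open scoped ENNReal

noncomputable section

/-- The partial ordering `μ ⪯ μ'` among positive measures on `ℝ`. -/
def MeasPrec (μ μ' : Measure ℝ) : Prop :=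
  ∀ s > 0, waveSup μ s ≤ waveSup μ' s

section DistributionFunction

theorem antitone_setOf_lt {α : Type*} (g : α → ℝ) : Antitone fun c => {x | c < g x} :=
  fun _ _ hcd _ hx => lt_of_le_of_lt hcd hx

variable {α : Type*} [MeasurableSpace α] {μ : Measure α} {g : α → ℝ}

theorem measure_setOf_lt_congr {f : α → ℝ} (hfg : f =ᵐ[μ] g) (c : ℝ) :
    μ {x | c < f x} = μ {x | c < g x} :=
  measure_congr (eventuallyEq_set.2 (by filter_upwards [hfg] with x hx; simp [hx]))

theorem measure_setOf_lt_le_of_forall_gt {a : ℝ} {s : ℝ≥0∞}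
    (h : ∀ c > a, μ {x | c < g x} ≤ s) : μ {x | a < g x} ≤ s := by
  obtain ⟨u, hu, hau, hlim⟩ := exists_seq_strictAnti_tendsto a
  have hunion : {x | a < g x} = ⋃ n, {x | u n < g x} := by
    ext x
    simp only [mem_ofPred_eq, mem_iUnion]
    exact ⟨fun hx => (hlim.eventually_lt_const hx).exists, fun ⟨n, hn⟩ => (hau n).trans hn⟩
  have hmono : Monotone fun n => {x | u n < g x} := (antitone_setOf_lt g).comp hu.antitone
  rw [hunion, hmono.measure_iUnion]
  exact iSup_le fun n => h _ (hau n)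

theorem le_measure_setOf_le_of_forall_lt (hg : Measurable g) {a b : ℝ} (hba : b < a)
    (hfin : μ {x | b < g x} ≠ ∞) {s : ℝ≥0∞} (h : ∀ c < a, s ≤ μ {x | c < g x}) :
    s ≤ μ {x | a ≤ g x} := by
  obtain ⟨u, hu, hua, hlim⟩ := exists_seq_strictMono_tendsto' hba
  have hinter : {x | a ≤ g x} = ⋂ n, {x | u n < g x} := by
    ext x
    simp only [mem_ofPred_eq, mem_iInter]
    exact ⟨fun hx n => (hua n).2.trans_le hx, fun hx => le_of_tendsto' hlim fun n => (hx n).le⟩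
  rw [hinter]
  exact ge_of_tendsto' (tendsto_measure_iInter_atTop
    (fun n => (measurableSet_lt measurable_const hg).nullMeasurableSet)
    ((antitone_setOf_lt g).comp_monotone hu.monotone)
    ⟨0, measure_ne_top_of_subset (antitone_setOf_lt g (hua 0).1.le) hfin⟩)
    fun n => h _ (hua n).2

theorem tendsto_measure_setOf_lt_atTop (hg : Measurable g) {b : ℝ}
    (hfin : μ {x | b < g x} ≠ ∞) :
    Tendsto (fun c => μ {x | c < g x}) atTop (nhds 0) := by
  have hempty : ⋂ c, {x | c < g x} = ∅ :=
    eq_empty_of_forall_notMem fun x hx => lt_irrefl (g x) (mem_iInter.1 hx (g x))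
  have h := tendsto_measure_iInter_atTop
    (fun c => (measurableSet_lt measurable_const hg).nullMeasurableSet)
    (antitone_setOf_lt g) ⟨b, hfin⟩
  rwa [hempty, measure_empty] at h

theorem exists_measure_setOf_lt_le_le_measure_setOf_le (hg : Measurable g) {b : ℝ}
    (hfin : ∀ c > b, μ {x | c < g x} ≠ ∞) {s : ℝ≥0∞} (hs : s ≠ 0)
    (hlarge : ∃ c > b, s < μ {x | c < g x}) :
    ∃ c > b, μ {x | c < g x} ≤ s ∧ s ≤ μ {x | c ≤ g x} := by
  obtain ⟨c₀, hbc₀, hc₀⟩ := hlarge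
  obtain ⟨c₁, hc₁⟩ : ∃ c, μ {x | c < g x} < s :=
    ((tendsto_measure_setOf_lt_atTop hg (hfin c₀ hbc₀)).eventually_lt_const
      (pos_iff_ne_zero.2 hs)).exists
  set T := {c | s < μ {x | c < g x}}
  have hT : BddAbove T := ⟨c₁, fun c hc => by
    by_contra! hlt
    exact ((measure_mono (antitone_setOf_lt g hlt.le)).trans hc₁.le).not_gt hc⟩
  have hbT : b < sSup T := hbc₀.trans_le (le_csSup hT hc₀)
  refine ⟨sSup T, hbT, ?_, ?_⟩
  · refine measure_setOf_lt_le_of_forall_gt fun c hc => ?_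
    by_contra! hlt
    exact (le_csSup hT hlt).not_gt hc
  · obtain ⟨d, hbd, hd⟩ := exists_between hbT
    refine le_measure_setOf_le_of_forall_lt hg hd (hfin d hbd) fun c hc => ?_
    obtain ⟨e, he, hce⟩ := exists_lt_of_lt_csSup ⟨c₀, hc₀⟩ hc
    exact he.le.trans (measure_mono (antitone_setOf_lt g hce.le))

theorem integrable_of_measure_setOf_lt_eq {β : Type*} [MeasurableSpace β] {ν : Measure β}
    {f : β → ℝ} (hf : Integrable f ν) (hf0 : 0 ≤ᵐ[ν] f) (hg : AEMeasurable g μ)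
    (hg0 : 0 ≤ᵐ[μ] g) (hfg : ∀ c > 0, μ {x | c < g x} = ν {x | c < f x}) : Integrable g μ := by
  refine ⟨hg.aestronglyMeasurable, (hasFiniteIntegral_iff_ofReal hg0).2 ?_⟩
  calc ∫⁻ x, ENNReal.ofReal (g x) ∂μ
      = ∫⁻ c in Ioi 0, μ {x | c < g x} := lintegral_eq_lintegral_meas_lt μ hg0 hg
    _ = ∫⁻ c in Ioi 0, ν {x | c < f x} := setLIntegral_congr_fun measurableSet_Ioi hfg
    _ = ∫⁻ x, ENNReal.ofReal (f x) ∂ν :=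
      (lintegral_eq_lintegral_meas_lt ν hf0 hf.aemeasurable).symm
    _ < ∞ := (hasFiniteIntegral_iff_ofReal hf0).1 hf.2

end DistributionFunction

section NonatomicSplitting

variable {μ : Measure ℝ} [NullSingletonClass μ]

theorem continuous_measureReal_Iic [IsFiniteMeasure μ] : Continuous fun r => μ.real (Iic r) := by
  have h := (intervalIntegral.continuous_primitive (μ := μ) (f := fun _ => (1 : ℝ))
    (fun _ _ => intervalIntegrable_const) 0).add_const (μ.real (Iic 0))
  convert h using 2 with r
  rw [← intervalIntegral.integral_Iic_sub_Iic (by simp) (by simp)]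
  simp

theorem exists_measure_Iic_eq [IsFiniteMeasure μ] {t : ℝ≥0∞} (ht0 : t ≠ 0) (ht : t < μ univ) :
    ∃ r, μ (Iic r) = t := by
  obtain ⟨a, ha⟩ : ∃ a, μ (Iic a) < t := by
    have h := tendsto_measure_iInter_atBot (μ := μ) (s := fun r : ℝ => Iic r)
      (fun _ => nullMeasurableSet_Iic) monotone_Iic ⟨0, measure_ne_top μ _⟩
    rw [iInter_Iic_eq_empty_iff.2 (by simp), measure_empty] at h
    exact (h.eventually_lt_const (pos_iff_ne_zero.2 ht0)).exists
  obtain ⟨b, hb⟩ : ∃ b, t < μ (Iic b) :=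
    ((tendsto_measure_Iic_atTop μ).eventually_const_lt ht).exists
  obtain ⟨r, hr⟩ := mem_range_of_exists_le_of_exists_ge (continuous_measureReal_Iic (μ := μ))
    ⟨a, ENNReal.toReal_mono ht.ne_top ha.le⟩ ⟨b, ENNReal.toReal_mono (measure_ne_top μ _) hb.le⟩
  exact ⟨r, (ENNReal.toReal_eq_toReal_iff' (measure_ne_top μ _) ht.ne_top).1 hr⟩

theorem exists_measurableSet_subset_measure_eq {D : Set ℝ} (hD : MeasurableSet D)
    (hfin : μ D ≠ ∞) {t : ℝ≥0∞} (ht : t ≤ μ D) :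
    ∃ E ⊆ D, MeasurableSet E ∧ μ E = t := by
  rcases ht.eq_or_lt with rfl | hlt
  · exact ⟨D, Subset.rfl, hD, rfl⟩
  rcases eq_or_ne t 0 with rfl | ht0
  · exact ⟨∅, empty_subset _, .empty, measure_empty⟩
  have : IsFiniteMeasure (μ.restrict D) := ⟨by simpa using hfin.lt_top⟩
  obtain ⟨r, hr⟩ := exists_measure_Iic_eq (μ := μ.restrict D) ht0 (by simpa using hlt)
  exact ⟨Iic r ∩ D, inter_subset_right, measurableSet_Iic.inter hD,
    (Measure.restrict_apply measurableSet_Iic).symm.trans hr⟩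

theorem exists_measurableSet_between_measure_eq_s1 {E F : Set ℝ} (hE : MeasurableSet E)
    (hF : MeasurableSet F) (hEF : E ⊆ F) (hfin : μ F ≠ ∞) {t : ℝ≥0∞} (hEt : μ E ≤ t)
    (htF : t ≤ μ F) : ∃ B, MeasurableSet B ∧ E ⊆ B ∧ B ⊆ F ∧ μ B = t := by
  obtain ⟨D, hD, hDm, hDt⟩ := exists_measurableSet_subset_measure_eq (hF.diff hE)
    (measure_ne_top_of_subset sdiff_subset hfin) (t := t - μ E) (by
      rw [measure_sdiff hEF hE.nullMeasurableSet (measure_ne_top_of_subset hEF hfin)]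
      exact tsub_le_tsub_right htF _)
  refine ⟨E ∪ D, hE.union hDm, subset_union_left,
    union_subset hEF (hD.trans sdiff_subset), ?_⟩
  rw [measure_union (disjoint_sdiff_right.mono_right hD) hDm, hDt, add_tsub_cancel_of_le hEt]

end NonatomicSplitting

section Bathtub

/-- The bathtub mass of `f` at `s`: for atomless `μ` and `f ≥ 0`, the largest value of
`∫ x in A, f x ∂μ` over sets `A` with `μ A ≤ s`. It is encoded by the layer cake formula, which
involves only the distribution of `f` and ignores levels below `0`. -/
def bathtubMass {α : Type*} [MeasurableSpace α] (μ : Measure α) (f : α → ℝ) (s : ℝ≥0∞) : ℝ≥0∞ :=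
  ∫⁻ c in Ioi (0 : ℝ), min s (μ {x | c < f x})

theorem bathtubMass_congr {α β : Type*} [MeasurableSpace α] [MeasurableSpace β] {μ : Measure α}
    {ν : Measure β} {f : α → ℝ} {g : β → ℝ}
    (hfg : ∀ c > 0, μ {x | c < f x} = ν {x | c < g x}) (s : ℝ≥0∞) :
    bathtubMass μ f s = bathtubMass ν g s :=
  setLIntegral_congr_fun measurableSet_Ioi fun c hc => by rw [hfg c hc]

theorem withDensity_ofReal_apply_eq_lintegral_measure_setOf_lt {α : Type*} [MeasurableSpace α]
    {μ : Measure α} {f : α → ℝ} (hf : AEMeasurable f μ) (hf0 : 0 ≤ᵐ[μ] f) {A : Set α}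
    (hA : MeasurableSet A) :
    μ.withDensity (fun x => ENNReal.ofReal (f x)) A =
      ∫⁻ c in Ioi 0, μ.restrict A {x | c < f x} := by
  rw [withDensity_apply _ hA,
    lintegral_eq_lintegral_meas_lt _ (ae_restrict_of_ae hf0) hf.restrict]

theorem withDensity_ofReal_apply_le_bathtubMass {α : Type*} [MeasurableSpace α] {μ : Measure α}
    {f : α → ℝ} (hf : AEMeasurable f μ) (hf0 : 0 ≤ᵐ[μ] f) {A : Set α} (hA : MeasurableSet A)
    {s : ℝ≥0∞} (hAs : μ A ≤ s) :
    μ.withDensity (fun x => ENNReal.ofReal (f x)) A ≤ bathtubMass μ f s := by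
  rw [withDensity_ofReal_apply_eq_lintegral_measure_setOf_lt hf hf0 hA]
  refine lintegral_mono fun c => le_min ?_ (Measure.restrict_apply_le _ _)
  calc μ.restrict A {x | c < f x} ≤ μ.restrict A univ := measure_mono (subset_univ _)
    _ ≤ s := by rwa [Measure.restrict_apply_univ]

variable {μ : Measure ℝ} [NullSingletonClass μ]

theorem exists_measurableSet_min_le_measure_inter_setOf_lt {g : ℝ → ℝ} (hg : Measurable g)
    (hfin : ∀ c > 0, μ {x | c < g x} ≠ ∞) (s : ℝ≥0∞) :
    ∃ B, MeasurableSet B ∧ μ B ≤ s ∧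
      ∀ c > 0, min s (μ {x | c < g x}) ≤ μ ({x | c < g x} ∩ B) := by
  rcases eq_or_ne s 0 with rfl | hs
  · exact ⟨∅, .empty, by simp, by simp⟩
  have hmeas (c : ℝ) : MeasurableSet {x | c < g x} := measurableSet_lt measurable_const hg
  by_cases hsmall : ∀ c > 0, μ {x | c < g x} ≤ s
  · refine ⟨{x | 0 < g x}, hmeas 0, measure_setOf_lt_le_of_forall_gt hsmall, fun c hc => ?_⟩
    rw [inter_eq_left.2 (antitone_setOf_lt g hc.le)]
    exact min_le_right _ _
  push Not at hsmall
  obtain ⟨a, ha0, has, hsa⟩ :=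
    exists_measure_setOf_lt_le_le_measure_setOf_le hg hfin hs hsmall
  have hafin : μ {x | a ≤ g x} ≠ ∞ :=
    measure_ne_top_of_subset (fun x hx => (half_lt_self ha0).trans_le hx) (hfin _ (half_pos ha0))
  -- Since part of `{g = a}` can be added at will, `B` contains or is contained in each level set.
  obtain ⟨B, hB, haB, hBa, hBs⟩ := exists_measurableSet_between_measure_eq_s1 (hmeas a)
    (measurableSet_le measurable_const hg) (fun x (hx : a < g x) => hx.le) hafin has hsa
  refine ⟨B, hB, hBs.le, fun c _ => ?_⟩
  rcases le_or_gt a c with hac | hca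
  · rw [inter_eq_left.2 ((antitone_setOf_lt g hac).trans haB)]
    exact min_le_right _ _
  · have hBc : B ⊆ {x | c < g x} := fun x hx => hca.trans_le (hBa hx)
    rw [inter_eq_right.2 hBc, hBs]
    exact min_le_left _ _

theorem exists_bathtubMass_le_withDensity_ofReal_apply {f : ℝ → ℝ} (hf : AEMeasurable f μ)
    (hf0 : 0 ≤ᵐ[μ] f) (hfin : ∀ c > 0, μ {x | c < f x} ≠ ∞) (s : ℝ≥0∞) :
    ∃ B, MeasurableSet B ∧ μ B ≤ s ∧
      bathtubMass μ f s ≤ μ.withDensity (fun x => ENNReal.ofReal (f x)) B := by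
  obtain ⟨g, hg, hfg⟩ := hf
  have hlevel (c : ℝ) : μ {x | c < f x} = μ {x | c < g x} := measure_setOf_lt_congr hfg c
  obtain ⟨B, hB, hBs, hBmin⟩ := exists_measurableSet_min_le_measure_inter_setOf_lt hg
    (fun c hc => hlevel c ▸ hfin c hc) s
  have hdensity : (fun x => ENNReal.ofReal (f x)) =ᵐ[μ] fun x => ENNReal.ofReal (g x) :=
    hfg.fun_comp ENNReal.ofReal
  refine ⟨B, hB, hBs, ?_⟩
  rw [withDensity_congr_ae hdensity,
    withDensity_ofReal_apply_eq_lintegral_measure_setOf_lt hg.aemeasurable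
      (hf0.trans hfg.le) hB, bathtubMass_congr fun c _ => hlevel c]
  exact setLIntegral_mono' measurableSet_Ioi fun c hc =>
    (hBmin c hc).trans (Measure.le_restrict_apply _ _)

end Bathtub

theorem measure_le_waveSup (μ : Measure ℝ) {A : Set ℝ} (hA : MeasurableSet A) {s : ℝ}
    (hAs : volume A ≤ ENNReal.ofReal s) : μ A ≤ waveSup μ s :=
  le_iSup₂_of_le A hA (le_iSup_of_le hAs le_rfl)

theorem waveSup_add_withDensity {σ : Measure ℝ} (hσ : σ ⟂ₘ volume) {f : ℝ → ℝ}
    (hf : AEMeasurable f) (hf0 : 0 ≤ᵐ[volume] f) (hfin : ∀ c > 0, volume {x | c < f x} ≠ ∞)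
    (s : ℝ) :
    waveSup (σ + volume.withDensity fun x => ENNReal.ofReal (f x)) s =
      σ univ + bathtubMass volume f (ENNReal.ofReal s) := by
  apply le_antisymm
  · refine iSup_le fun A => iSup_le fun hA => iSup_le fun hAs => ?_
    exact add_le_add (measure_mono (subset_univ A))
      (withDensity_ofReal_apply_le_bathtubMass hf hf0 hA hAs)
  · obtain ⟨N, hN, hσN, hNc⟩ := hσ
    obtain ⟨B, hB, hBs, hmass⟩ := exists_bathtubMass_le_withDensity_ofReal_apply hf hf0 hfin
      (ENNReal.ofReal s)
    have hσB : σ univ ≤ σ (B ∪ Nᶜ) := by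
      rw [← measure_add_measure_compl hN, hσN, zero_add]
      exact measure_mono subset_union_right
    refine (add_le_add hσB (hmass.trans (measure_mono subset_union_left))).trans
      (measure_le_waveSup _ (hB.union hN.compl) ?_)
    exact (measure_union_le _ _).trans (by rwa [hNc, add_zero])

section StieltjesMeasure

variable {f v : ℝ → ℝ} {a c₁ c₂ : ℝ}

theorem stieltjesFunction_eq_step_add_integral (hv : Monotone v)
    (hf : ∀ x y, IntervalIntegrable f volume x y)
    (hlt : ∀ x < a, v x = c₁ + ∫ y in a..x, f y) (hgt : ∀ x > a, v x = c₂ + ∫ y in a..x, f y)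
    (x : ℝ) :
    hv.stieltjesFunction x = (if x < a then c₁ else c₂) + ∫ y in a..x, f y := by
  have hright (c : ℝ) : Tendsto (fun r => c + ∫ y in a..r, f y) (nhdsWithin x (Ioi x))
      (nhds (c + ∫ y in a..x, f y)) :=
    (continuous_const.add (intervalIntegral.continuous_primitive hf a)).continuousWithinAt
  rw [hv.stieltjesFunction_eq]
  refine rightLim_eq_of_tendsto ?_
  split_ifs with hx
  · refine (hright c₁).congr' ?_
    filter_upwards [nhdsWithin_le_nhds (Iio_mem_nhds hx)] with r hr using (hlt r hr).symm
  · refine (hright c₂).congr' ?_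
    filter_upwards [self_mem_nhdsWithin] with r hr using (hgt r ((not_lt.1 hx).trans_lt hr)).symm

theorem withDensity_ofReal_Ioc {μ : Measure ℝ} {x y : ℝ} (hxy : x ≤ y)
    (hf : IntervalIntegrable f μ x y) (hf0 : 0 ≤ᵐ[μ] f) :
    μ.withDensity (fun x => ENNReal.ofReal (f x)) (Ioc x y) =
      ENNReal.ofReal (∫ t in x..y, f t ∂μ) := by
  rw [withDensity_apply _ measurableSet_Ioc, intervalIntegral.integral_of_le hxy,
    ofReal_integral_eq_lintegral_ofReal hf.1 (ae_restrict_of_ae hf0)]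

theorem measure_eq_smul_dirac_add_withDensity {G : StieltjesFunction ℝ} (hc : c₁ ≤ c₂)
    (hf : ∀ x y, IntervalIntegrable f volume x y) (hf0 : 0 ≤ᵐ[volume] f)
    (hG : ∀ x, G x = (if x < a then c₁ else c₂) + ∫ y in a..x, f y) :
    G.measure = ENNReal.ofReal (c₂ - c₁) • Measure.dirac a +
      volume.withDensity fun x => ENNReal.ofReal (f x) := by
  refine Measure.ext_of_Ioc _ _ fun x y hxy => ?_
  have hsub : (∫ t in a..y, f t) - ∫ t in a..x, f t = ∫ t in x..y, f t :=
    intervalIntegral.integral_interval_sub_left (hf a y) (hf a x)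
  have hnonneg : 0 ≤ ∫ t in x..y, f t :=
    intervalIntegral.integral_nonneg_of_ae hxy.le hf0
  have hstep : G y - G x =
      (if x < a ∧ a ≤ y then c₂ - c₁ else 0) + ∫ t in x..y, f t := by
    rw [hG, hG, ← hsub]
    grind
  have hdirac : (ENNReal.ofReal (c₂ - c₁) • Measure.dirac a) (Ioc x y) =
      ENNReal.ofReal (if x < a ∧ a ≤ y then c₂ - c₁ else 0) := by
    rw [Measure.smul_apply, Measure.dirac_apply' _ measurableSet_Ioc, smul_eq_mul]
    by_cases ha : x < a ∧ a ≤ y <;> simp [ha, indicator, mem_Ioc]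
  rw [StieltjesFunction.measure_Ioc, hstep, ENNReal.ofReal_add _ hnonneg, Measure.add_apply,
    hdirac, withDensity_ofReal_Ioc hxy.le (hf x y) hf0]
  split_ifs
  exacts [sub_nonneg.2 hc, le_rfl]

theorem eq_neg_add_integral_of_odd (hodd : ∀ x, v (-x) = -v x) (heven : ∀ x, f (-x) = f x)
    (hpos : ∀ x > 0, v x = c₁ + ∫ y in (0 : ℝ)..x, f y) {x : ℝ} (hx : x < 0) :
    v x = -c₁ + ∫ y in (0 : ℝ)..x, f y := by
  have hreflect : ∫ y in (0 : ℝ)..(-x), f y = -∫ y in (0 : ℝ)..x, f y := by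
    have h := intervalIntegral.integral_comp_neg (a := 0) (b := -x) f
    simp only [heven, neg_zero, neg_neg] at h
    rw [h, intervalIntegral.integral_symm]
  have hv := hpos (-x) (neg_pos.2 hx)
  rw [hodd, hreflect] at hv
  linarith

theorem measure_stieltjesFunction_of_odd {m : ℝ} (hm : 0 ≤ m)
    (hf : ∀ x y, IntervalIntegrable f volume x y) (hf0 : 0 ≤ᵐ[volume] f)
    (heven : ∀ x, f (-x) = f x) (hodd : ∀ x, v (-x) = -v x)
    (hpos : ∀ x > 0, v x = m / 2 + ∫ y in (0 : ℝ)..x, f y) (hv : Monotone v) :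
    hv.stieltjesFunction.measure =
      ENNReal.ofReal m • Measure.dirac 0 + volume.withDensity fun x => ENNReal.ofReal (f x) := by
  have h := measure_eq_smul_dirac_add_withDensity (by linarith) hf hf0
    (stieltjesFunction_eq_step_add_integral hv hf
      (fun _ => eq_neg_add_integral_of_odd hodd heven hpos) hpos)
  rwa [sub_neg_eq_add, add_halves] at h

end StieltjesMeasure

theorem aemeasurable_of_even_of_antitoneOn {μ : Measure ℝ} {f : ℝ → ℝ}
    (heven : ∀ x, f (-x) = f x) (hanti : AntitoneOn f (Ioi 0)) : AEMeasurable f μ := by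
  have hmono : MonotoneOn f (Iio 0) := fun x hx y hy hxy => by
    rw [← heven x, ← heven y]
    exact hanti (mem_Ioi.2 (neg_pos.2 hy)) (mem_Ioi.2 (neg_pos.2 hx)) (neg_le_neg hxy)
  rw [← Measure.restrict_univ (μ := μ), ← Iic_union_Ioi (a := (0 : ℝ)), ← Iio_union_right,
    aemeasurable_union_iff, aemeasurable_union_iff, Measure.restrict_singleton]
  exact ⟨⟨aemeasurable_restrict_of_monotoneOn measurableSet_Iio hmono,
    aemeasurable_dirac.smul_measure _⟩,
    aemeasurable_restrict_of_antitoneOn measurableSet_Ioi hanti⟩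

theorem odd_rearrangement_equivalent_general
    (μ μs : Measure ℝ) [IsFiniteMeasure μs]
    (z : ℝ → ℝ) (hz_int : Integrable z) (hz_nonneg : ∀ x, 0 ≤ z x)
    (hsing : μs ⟂ₘ volume)
    (hdecomp : μ = μs + volume.withDensity (fun x => ENNReal.ofReal (z x)))
    (zhat : ℝ → ℝ)
    (hzhat_even : ∀ x, zhat (-x) = zhat x)
    (hzhat_nonneg : ∀ x, 0 ≤ zhat x)
    (hzhat_meas : AEMeasurable zhat)
    (hzhat_rearr : ∀ c > 0, volume {x | c < zhat x} = volume {x | c < z x})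
    (vhat : ℝ → ℝ)
    (hvhat_odd : ∀ x, vhat (-x) = -vhat x)
    (hvhat_pos : ∀ x > 0, vhat x = (μs Set.univ).toReal / 2 + ∫ y in (0 : ℝ)..x, zhat y)
    (hvhat_mono : Monotone vhat) :
    MeasPrec μ hvhat_mono.stieltjesFunction.measure ∧
      MeasPrec hvhat_mono.stieltjesFunction.measure μ := by
  have hz0 : 0 ≤ᵐ[volume] z := ae_of_all _ hz_nonneg
  have hzhat0 : 0 ≤ᵐ[volume] zhat := ae_of_all _ hzhat_nonneg
  have hzhat_int : Integrable zhat :=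
    integrable_of_measure_setOf_lt_eq hz_int hz0 hzhat_meas hzhat0 hzhat_rearr
  have hν : hvhat_mono.stieltjesFunction.measure =
      μs univ • Measure.dirac 0 + volume.withDensity fun x => ENNReal.ofReal (zhat x) := by
    rw [measure_stieltjesFunction_of_odd ENNReal.toReal_nonneg
      (fun _ _ => hzhat_int.intervalIntegrable) hzhat0 hzhat_even hvhat_odd hvhat_pos,
      ENNReal.ofReal_toReal (measure_ne_top μs univ)]
  have hwave (s : ℝ) : waveSup μ s = waveSup hvhat_mono.stieltjesFunction.measure s := by
    rw [hdecomp, hν,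
      waveSup_add_withDensity hsing hz_int.aemeasurable hz0
        fun _ hc => (hz_int.measure_gt_lt_top hc).ne,
      waveSup_add_withDensity ((mutuallySingular_dirac 0 volume).smul _) hzhat_meas hzhat0
        fun _ hc => (hzhat_int.measure_gt_lt_top hc).ne,
      bathtubMass_congr hzhat_rearr]
    simp
  exact ⟨fun s _ => (hwave s).le, fun s _ => (hwave s).ge⟩

/-- Part of Proposition 1: if `vhat` is the odd rearrangement of a finite positive
measure `μ` and `ν̂` is the Lebesgue–Stieltjes measure of (the right-continuous
modification of) `vhat`, then `μ ⪯ ν̂` and `ν̂ ⪯ μ`. -/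
theorem odd_rearrangement_equivalent
    (μ μs : Measure ℝ) [IsFiniteMeasure μ] [IsFiniteMeasure μs]
    (z : ℝ → ℝ) (hz_int : Integrable z) (hz_nonneg : ∀ x, 0 ≤ z x)
    (hsing : μs ⟂ₘ volume)
    (hdecomp : μ = μs + volume.withDensity (fun x => ENNReal.ofReal (z x)))
    (zhat : ℝ → ℝ)
    (hzhat_even : ∀ x, zhat (-x) = zhat x)
    (hzhat_nonneg : ∀ x, 0 ≤ zhat x)
    (hzhat_anti : AntitoneOn zhat (Set.Ioi 0))
    (hzhat_rearr : ∀ c > 0, volume {x | c < zhat x} = volume {x | c < z x})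
    (vhat : ℝ → ℝ)
    (hvhat_odd : ∀ x, vhat (-x) = -vhat x)
    (hvhat_pos : ∀ x > 0, vhat x = (μs Set.univ).toReal / 2 + ∫ y in (0:ℝ)..x, zhat y)
    (hvhat_mono : Monotone vhat) :
    MeasPrec μ hvhat_mono.stieltjesFunction.measure ∧
      MeasPrec hvhat_mono.stieltjesFunction.measure μ := by
  exact odd_rearrangement_equivalent_general μ μs z hz_int hz_nonneg hsing hdecomp zhat hzhat_even
    hzhat_nonneg (aemeasurable_of_even_of_antitoneOn hzhat_even hzhat_anti) hzhat_rearr vhat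
    hvhat_odd hvhat_pos hvhat_mono
end
end

section
/- Let μ and μ' be finite positive Borel measures on ℝ, and let J₁, …, J_N be pairwise disjoint Borel subsets of ℝ with J₁ ∪ ⋯ ∪ J_N = ℝ. If for every ℓ ∈ {1, …, N} the restricted measures satisfy μ⌊J_ℓ ⪯ μ'⌊J_ℓ, then μ ⪯ μ'. (Proposition 2.) -/
open MeasureTheory Set Filter
open scoped ENNReal

noncomputable section

/-!
For a reference measure `ν` let `concentration ν μ t` be the supremum of `μ A` over the measurable
sets with `ν A ≤ t`. If `ν A ≤ t`, then `μ A` is the sum of the masses `μ (A ∩ J i)`, each at most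
the concentration of `μ⌊J i` at `ν (A ∩ J i)`, and hence at most that of `μ'⌊J i`. Taking the union
of near-optimal sets for the pieces shows that the latter add up to at most the concentration of
`μ'` at `∑ ν (A ∩ J i) = ν A ≤ t`.

The comparison of the pieces is assumed at positive levels only, while `A ∩ J i` may be `ν`-null.
When `μ'` has finite concentration at some positive level, a Borel–Cantelli argument extends the
comparison to level `0`; otherwise there is nothing to prove.
-/

lemma tsum_iSup_eq_iSup_tsum_pi {ι : Type*} {β : ι → Type*} [∀ i, Nonempty (β i)]
    (f : ∀ i, β i → ℝ≥0∞) : ∑' i, ⨆ b, f i b = ⨆ g : ∀ i, β i, ∑' i, f i (g i) := by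
  have exists_max (g g' : ∀ i, β i) : ∃ k : ∀ i, β i, ∀ i,
      f i (g i) ≤ f i (k i) ∧ f i (g' i) ≤ f i (k i) := by
    have pointwise (i : ι) : ∃ b, f i (g i) ≤ f i b ∧ f i (g' i) ≤ f i b :=
      (le_total (f i (g i)) (f i (g' i))).elim
        (fun h => ⟨g' i, h, le_rfl⟩) fun h => ⟨g i, le_rfl, h⟩
    exact Classical.skolem.1 pointwise
  have iSup_eval (i : ι) : ⨆ b, f i b = ⨆ g : ∀ i, β i, f i (g i) :=
    ((Function.surjective_eval i).iSup_comp (f i)).symm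
  simp_rw [iSup_eval, ENNReal.tsum_eq_iSup_sum, ENNReal.finsetSum_iSup exists_max]
  exact iSup_comm

section

variable {α : Type*} [MeasurableSpace α]

lemma le_measure_limsup_atTop {μ : Measure α} {c : ℝ≥0∞} {B : ℕ → Set α}
    (hB : ∀ n, MeasurableSet (B n)) (hfin : μ (⋃ n, B n) ≠ ∞) (hc : ∀ n, c ≤ μ (B n)) :
    c ≤ μ (limsup B atTop) := by
  have limsup_eq : limsup B atTop = ⋂ n, ⋃ k, B (k + n) := limsup_eq_iInf_iSup_of_nat'
  have tails_antitone : Antitone fun n => ⋃ k, B (k + n) :=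
    antitone_nat_of_succ_le fun n => iUnion_subset fun k =>
      subset_iUnion_of_subset (k + 1) (by rw [add_right_comm, add_assoc])
  rw [limsup_eq, tails_antitone.measure_iInter
    (fun n => (MeasurableSet.iUnion fun k => hB (k + n)).nullMeasurableSet) ⟨0, hfin⟩]
  exact le_iInf fun n => (hc (0 + n)).trans (measure_mono (subset_iUnion (fun k => B (k + n)) 0))

lemma measure_eq_tsum_inter {ι : Type*} [Countable ι] {J : ι → Set α}
    (hJmeas : ∀ i, MeasurableSet (J i)) (hJdisj : Pairwise (Function.onFun Disjoint J))
    (hJcover : ⋃ i, J i = univ) (μ : Measure α) {A : Set α} (hA : MeasurableSet A) :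
    μ A = ∑' i, μ (A ∩ J i) := by
  have := Measure.restrict_iUnion_apply (μ := μ) hJdisj hJmeas hA
  simpa only [hJcover, Measure.restrict_univ, Measure.restrict_apply hA] using this

/-- The largest `μ`-mass of a measurable set of `ν`-measure at most `t`. For `ν` the Lebesgue
measure on `ℝ` this is `waveSup μ`, with levels in `ℝ≥0∞` in place of `ℝ`. -/
def concentration (ν μ : Measure α) (t : ℝ≥0∞) : ℝ≥0∞ :=
  ⨆ (A : Set α) (_ : MeasurableSet A) (_ : ν A ≤ t), μ A

/-- The order `μ ⪯ μ'` relative to a reference measure `ν`. As in `MeasPrec`, the concentrations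
are compared at positive finite levels only. -/
def ConcentrationLE (ν μ μ' : Measure α) : Prop :=
  ∀ t, t ≠ 0 → t ≠ ∞ → concentration ν μ t ≤ concentration ν μ' t

variable {ν μ μ' : Measure α} {s t c : ℝ≥0∞}

lemma measure_le_concentration {A : Set α} (hA : MeasurableSet A) (hAt : ν A ≤ t) :
    μ A ≤ concentration ν μ t :=
  le_iSup_of_le A (le_iSup_of_le hA (le_iSup_of_le hAt le_rfl))

lemma concentration_le_iff :
    concentration ν μ t ≤ c ↔ ∀ A, MeasurableSet A → ν A ≤ t → μ A ≤ c := by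
  simp only [concentration, iSup_le_iff]

lemma lt_concentration_iff :
    c < concentration ν μ t ↔ ∃ A, MeasurableSet A ∧ ν A ≤ t ∧ c < μ A := by
  simp only [concentration, lt_iSup_iff, exists_prop]

lemma concentration_mono (hst : s ≤ t) : concentration ν μ s ≤ concentration ν μ t :=
  concentration_le_iff.2 fun _ hA hAs => measure_le_concentration hA (hAs.trans hst)

lemma concentration_mono_measure (h : μ ≤ μ') : concentration ν μ t ≤ concentration ν μ' t :=
  concentration_le_iff.2 fun A hA hAt => (h A).trans (measure_le_concentration hA hAt)

lemma concentration_eq_iSup_subtype :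
    concentration ν μ t = ⨆ A : {A : Set α // MeasurableSet A ∧ ν A ≤ t}, μ A := by
  simp only [concentration, iSup_subtype, iSup_and]

lemma le_concentration_zero (ht : t ≠ 0) (hfin : concentration ν μ t ≠ ∞)
    (hc : ∀ r, r ≠ 0 → r ≠ ∞ → c ≤ concentration ν μ r) : c ≤ concentration ν μ 0 := by
  refine le_of_forall_lt_imp_le_of_dense fun b hbc => ?_
  obtain ⟨δ, hδpos, hδt⟩ := ENNReal.exists_pos_sum_of_countable ht ℕ
  choose B hBmeas hBδ hbB using fun n => lt_concentration_iff.1 <|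
    hbc.trans_le (hc (δ n) (ENNReal.coe_ne_zero.2 (hδpos n).ne') ENNReal.coe_ne_top)
  have hsum : ∑' n, ν (B n) ≤ t := (ENNReal.tsum_le_tsum hBδ).trans hδt.le
  have hnull : ν (limsup B atTop) = 0 := measure_limsup_atTop_eq_zero <|
    ne_top_of_le_ne_top hδt.ne_top (ENNReal.tsum_le_tsum hBδ)
  have hunion : μ (⋃ n, B n) ≠ ∞ := ne_top_of_le_ne_top hfin <|
    measure_le_concentration (MeasurableSet.iUnion hBmeas) ((measure_iUnion_le B).trans hsum)
  exact (le_measure_limsup_atTop hBmeas hunion fun n => (hbB n).le).trans <|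
    measure_le_concentration (MeasurableSet.measurableSet_limsup hBmeas) hnull.le

lemma ConcentrationLE.concentration_le (h : ConcentrationLE ν μ μ') (ht : t ≠ 0)
    (hfin : concentration ν μ' t ≠ ∞) (hs : s ≠ ∞) :
    concentration ν μ s ≤ concentration ν μ' s := by
  rcases eq_or_ne s 0 with rfl | hs0
  · exact le_concentration_zero ht hfin fun r hr0 hr =>
      (concentration_mono zero_le).trans (h r hr0 hr)
  · exact h s hs0 hs

lemma tsum_concentration_restrict_le {ι : Type*} [Countable ι] {J : ι → Set α}
    (hJmeas : ∀ i, MeasurableSet (J i)) (hJdisj : Pairwise (Function.onFun Disjoint J))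
    (t : ι → ℝ≥0∞) :
    ∑' i, concentration ν (μ.restrict (J i)) (t i) ≤ concentration ν μ (∑' i, t i) := by
  have (i : ι) : Nonempty {A : Set α // MeasurableSet A ∧ ν A ≤ t i} :=
    ⟨∅, MeasurableSet.empty, by simp⟩
  simp_rw [concentration_eq_iSup_subtype (μ := μ.restrict _), tsum_iSup_eq_iSup_tsum_pi]
  refine iSup_le fun A => ?_
  have hAJ (i : ι) : MeasurableSet (A i ∩ J i) := (A i).2.1.inter (hJmeas i)
  have hdisj : Pairwise (Function.onFun Disjoint fun i => (A i ∩ J i : Set α)) :=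
    fun i j hij => (hJdisj hij).mono inter_subset_right inter_subset_right
  have hν : ν (⋃ i, A i ∩ J i) ≤ ∑' i, t i := (measure_iUnion_le _).trans <|
    ENNReal.tsum_le_tsum fun i => (measure_mono inter_subset_left).trans (A i).2.2
  calc
    ∑' i, μ.restrict (J i) (A i) = ∑' i, μ (A i ∩ J i) :=
      tsum_congr fun i => Measure.restrict_apply (A i).2.1
    _ = μ (⋃ i, A i ∩ J i) := (measure_iUnion hdisj hAJ).symm
    _ ≤ concentration ν μ (∑' i, t i) := measure_le_concentration (MeasurableSet.iUnion hAJ) hν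

theorem prec_of_partition_general {ι : Type*} [Countable ι] {J : ι → Set α}
    (hJmeas : ∀ i, MeasurableSet (J i)) (hJdisj : Pairwise (Function.onFun Disjoint J))
    (hJcover : ⋃ i, J i = univ)
    (hrestr : ∀ i, ConcentrationLE ν (μ.restrict (J i)) (μ'.restrict (J i))) :
    ConcentrationLE ν μ μ' := by
  intro t ht0 ht
  rcases eq_or_ne (concentration ν μ' t) ∞ with htop | hfin
  · exact htop ▸ le_top
  refine concentration_le_iff.2 fun A hA hAt => ?_
  have hrestr_fin (i : ι) : concentration ν (μ'.restrict (J i)) t ≠ ∞ :=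
    ne_top_of_le_ne_top hfin (concentration_mono_measure Measure.restrict_le_self)
  have hAJ_fin (i : ι) : ν (A ∩ J i) ≠ ∞ :=
    ne_top_of_le_ne_top ht ((measure_mono inter_subset_left).trans hAt)
  calc
    μ A = ∑' i, μ (A ∩ J i) := measure_eq_tsum_inter hJmeas hJdisj hJcover μ hA
    _ = ∑' i, μ.restrict (J i) (A ∩ J i) :=
      tsum_congr fun i => (Measure.restrict_eq_self μ inter_subset_right).symm
    _ ≤ ∑' i, concentration ν (μ.restrict (J i)) (ν (A ∩ J i)) :=
      ENNReal.tsum_le_tsum fun i => measure_le_concentration (hA.inter (hJmeas i)) le_rfl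
    _ ≤ ∑' i, concentration ν (μ'.restrict (J i)) (ν (A ∩ J i)) :=
      ENNReal.tsum_le_tsum fun i => (hrestr i).concentration_le ht0 (hrestr_fin i) (hAJ_fin i)
    _ ≤ concentration ν μ' (∑' i, ν (A ∩ J i)) := tsum_concentration_restrict_le hJmeas hJdisj _
    _ = concentration ν μ' (ν A) := by rw [← measure_eq_tsum_inter hJmeas hJdisj hJcover ν hA]
    _ ≤ concentration ν μ' t := concentration_mono hAt

end

lemma measPrec_iff_concentrationLE {μ μ' : Measure ℝ} :
    MeasPrec μ μ' ↔ ConcentrationLE volume μ μ' := by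
  refine ⟨fun h t ht0 ht => ?_, fun h s hs =>
    h (ENNReal.ofReal s) (ENNReal.ofReal_pos.2 hs).ne' ENNReal.ofReal_ne_top⟩
  have := h t.toReal (ENNReal.toReal_pos ht0 ht)
  simpa only [waveSup, concentration, ENNReal.ofReal_toReal ht] using this

/-- Proposition 2: if `ℝ = J₁ ∪ ⋯ ∪ J_N` is a finite Borel partition and the
restrictions satisfy `μ⌊J_ℓ ⪯ μ'⌊J_ℓ` for every `ℓ`, then `μ ⪯ μ'`. -/
theorem prec_of_partition
    (μ μ' : Measure ℝ) [IsFiniteMeasure μ] [IsFiniteMeasure μ']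
    (N : ℕ) (J : Fin N → Set ℝ)
    (hJmeas : ∀ ℓ, MeasurableSet (J ℓ))
    (hJdisj : Pairwise (Function.onFun Disjoint J))
    (hJcover : (⋃ ℓ, J ℓ) = Set.univ)
    (hrestr : ∀ ℓ, MeasPrec (μ.restrict (J ℓ)) (μ'.restrict (J ℓ))) :
    MeasPrec μ μ' := by
  simp_rw [measPrec_iff_concentrationLE] at hrestr ⊢
  exact prec_of_partition_general hJmeas hJdisj hJcover hrestr
end
end

section
/- Let w : ℝ → ℝ be a nondecreasing odd function, ν its associated Lebesgue–Stieltjes measure, and δ₀ the Dirac point mass at 0. Let μ and μ♯ be finite positive Borel measures on ℝ such that μ ⪯ ν and such that the total variation of the signed measure μ♯ − μ satisfies |μ♯ − μ|(ℝ) ≤ ε. Then μ♯ ⪯ ν + ε·δ₀. (Proposition 3.) -/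
open MeasureTheory Set Filter
open scoped ENNReal

noncomputable section

theorem le_waveSup (μ : Measure ℝ) {s : ℝ} {A : Set ℝ} (hA : MeasurableSet A)
    (hAs : volume A ≤ ENNReal.ofReal s) : μ A ≤ waveSup μ s :=
  le_iSup_of_le A <| le_iSup₂_of_le hA hAs le_rfl

theorem waveSup_le {μ : Measure ℝ} {s : ℝ} {c : ℝ≥0∞}
    (h : ∀ A, MeasurableSet A → volume A ≤ ENNReal.ofReal s → μ A ≤ c) : waveSup μ s ≤ c :=
  iSup_le fun A => iSup₂_le (h A)

theorem waveSup_mono {μ μ' : Measure ℝ} (h : μ ≤ μ') (s : ℝ) : waveSup μ s ≤ waveSup μ' s :=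
  waveSup_le fun A hA hAs => (h A).trans (le_waveSup μ' hA hAs)

theorem waveSup_add_le (μ τ : Measure ℝ) (s : ℝ) :
    waveSup (μ + τ) s ≤ waveSup μ s + τ univ :=
  waveSup_le fun A hA hAs =>
    add_le_add (le_waveSup μ hA hAs) (measure_mono (subset_univ A))

/-- A point can be adjoined to any competitor at no cost in Lebesgue measure, so the whole point
mass is gained. -/
theorem waveSup_add_smul_dirac (ν : Measure ℝ) (c : ℝ≥0∞) (x s : ℝ) :
    waveSup (ν + c • Measure.dirac x) s = waveSup ν s + c := by
  refine le_antisymm (by simpa using waveSup_add_le ν (c • Measure.dirac x) s) ?_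
  have insert_le (A : Set ℝ) (hA : MeasurableSet A) (hAs : volume A ≤ ENNReal.ofReal s) :
      ν A + c ≤ waveSup (ν + c • Measure.dirac x) s :=
    calc ν A + c ≤ ν (insert x A) + c := by gcongr; exact subset_insert x A
      _ = (ν + c • Measure.dirac x) (insert x A) := by simp
      _ ≤ waveSup (ν + c • Measure.dirac x) s :=
        le_waveSup _ (hA.insert x) (by rwa [measure_congr (insert_ae_eq_self x A)])
  calc waveSup ν s + c
      = ⨆ (A : Set ℝ) (_ : MeasurableSet A ∧ volume A ≤ ENNReal.ofReal s), (ν A + c) := by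
        simp only [waveSup, iSup_and']
        exact ENNReal.biSup_add' ⟨∅, MeasurableSet.empty, by simp⟩ _
    _ ≤ waveSup (ν + c • Measure.dirac x) s := iSup₂_le fun A hA => insert_le A hA.1 hA.2

theorem le_add_totalVariation_toSignedMeasure_sub {α : Type*} [MeasurableSpace α]
    (μ ν : Measure α) [IsFiniteMeasure μ] [IsFiniteMeasure ν] :
    μ ≤ ν + (μ.toSignedMeasure - ν.toSignedMeasure).totalVariation := by
  set σ := μ.toSignedMeasure - ν.toSignedMeasure with hσ
  refine Measure.le_iff.2 fun A hA => tsub_le_iff_left.1 ?_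
  calc μ A - ν A = ENNReal.ofReal (σ A) := by
        rw [hσ, Measure.toSignedMeasure_sub_apply hA,
          ENNReal.ofReal_sub _ measureReal_nonneg, ofReal_measureReal, ofReal_measureReal]
    _ ≤ ‖σ A‖ₑ := Real.ofReal_le_enorm _
    _ ≤ σ.totalVariation A := σ.enorm_le_totalVariation A

theorem prec_perturbation_general {μ μsharp ν : Measure ℝ} [IsFiniteMeasure μ]
    [IsFiniteMeasure μsharp] {ε : ℝ≥0∞} (hprec : MeasPrec μ ν)
    (hclose : (μsharp.toSignedMeasure - μ.toSignedMeasure).totalVariation univ ≤ ε) (x : ℝ) :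
    MeasPrec μsharp (ν + ε • Measure.dirac x) := by
  intro s hs
  set τ := (μsharp.toSignedMeasure - μ.toSignedMeasure).totalVariation
  calc waveSup μsharp s ≤ waveSup (μ + τ) s :=
        waveSup_mono (le_add_totalVariation_toSignedMeasure_sub μsharp μ) s
    _ ≤ waveSup μ s + τ univ := waveSup_add_le μ τ s
    _ ≤ waveSup ν s + ε := add_le_add (hprec s hs) hclose
    _ = waveSup (ν + ε • Measure.dirac x) s := (waveSup_add_smul_dirac ν ε x s).symm

/-- Proposition 3: if `μ ⪯ ν` where `ν` is the Lebesgue–Stieltjes measure of a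
nondecreasing odd function `w`, and `|μ♯ − μ|(ℝ) ≤ ε`, then `μ♯ ⪯ ν + ε·δ₀`. -/
theorem prec_perturbation
    (w : ℝ → ℝ) (hw_mono : Monotone w) (hw_odd : ∀ x, w (-x) = -w x)
    (μ μsharp : Measure ℝ) [IsFiniteMeasure μ] [IsFiniteMeasure μsharp]
    (ε : ℝ)
    (hprec : MeasPrec μ hw_mono.stieltjesFunction.measure)
    (hclose : (μsharp.toSignedMeasure - μ.toSignedMeasure).totalVariation Set.univ
        ≤ ENNReal.ofReal ε) :
    MeasPrec μsharp
      (hw_mono.stieltjesFunction.measure + ENNReal.ofReal ε • Measure.dirac 0) :=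
  prec_perturbation_general hprec hclose 0
end
end

section
/- Let (μ_ν) be a sequence of finite signed Borel measures on ℝ whose total variation measures |μ_ν| are uniformly bounded in mass and uniformly tight, and suppose μ_ν converges weakly to a finite signed Borel measure μ, i.e. ∫ f dμ_ν → ∫ f dμ for every bounded continuous f : ℝ → ℝ. Let μ_ν⁺ denote the positive part in the Jordan decomposition of μ_ν, and assume there are odd, nondecreasing functions w_ν : ℝ → ℝ, concave on (0,∞), such that for every ν, every s > 0 and every Borel set A with Leb(A) ≤ 2s one has μ_ν⁺(A) ≤ 2·w_ν(s). Define w(s) := liminf_{ν→∞} w_ν(s) ∈ [0,∞] for s > 0. Then the positive part μ⁺ of μ satisfies: for every s > 0 and every Borel set A with Leb(A) ≤ 2s, μ⁺(A) ≤ 2·w(s). (Proposition 4.) -/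
open MeasureTheory Set Filter
open scoped ENNReal Topology

noncomputable section

/-- The integral of `f` against a finite signed measure `σ`, defined through the
Jordan decomposition `σ = σ⁺ − σ⁻`. -/
def signedIntegral (σ : SignedMeasure ℝ) (f : ℝ → ℝ) : ℝ :=
  (∫ x, f x ∂σ.toJordanDecomposition.posPart) -
    (∫ x, f x ∂σ.toJordanDecomposition.negPart)

/-! Fix the size bound. Almost all of the mass that `μ⁺` gives to an admissible set sits on a
compact set `K` that is null for `μ⁻`. Since Lebesgue measure does not charge points, a punctured
neighbourhood of a point can be cut out of `K` so that `K` becomes strictly smaller than the bound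
while losing almost no mass. There is then room for an open `U ⊇ K` that is still admissible and has
small `μ⁻`-mass. Testing the convergence on a single cutoff function between `K` and `U` transfers
the mass of `K` to `μ_ν⁺(U)` for all large `ν`. -/

variable {X : Type*} [TopologicalSpace X] [MeasurableSpace X] {m P N : Measure X} {K A : Set X}
  {r b : ℝ≥0∞}

lemma exists_isCompact_subset_measure_lt_measure_and_lt [SecondCountableTopology X] [T1Space X]
    [OpensMeasurableSpace X] [NullSingletonClass m] [IsFiniteMeasureOnCompacts m]
    [IsFiniteMeasureOnCompacts P] [P.OuterRegular] (hK : IsCompact K) (hmK : m K ≠ 0)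
    (hb : b < P K) :
    ∃ K' ⊆ K, IsCompact K' ∧ m K' < m K ∧ b < P K' := by
  obtain ⟨x, hxK, hx⟩ := exists_mem_forall_mem_nhdsWithin_pos_measure hmK
  obtain ⟨U, hxU, hU, hPU⟩ := ({x} : Set X).exists_isOpen_lt_add (μ := P)
    isCompact_singleton.measure_ne_top (tsub_pos_of_lt hb).ne'
  have hK' : IsCompact (insert x (K \ U)) := (hK.diff hU).insert x
  refine ⟨insert x (K \ U), insert_subset hxK sdiff_subset, hK', ?_, ?_⟩
  · have hpos : 0 < m (K ∩ U) := hx _ (inter_mem_nhdsWithin K (hU.mem_nhds (hxU rfl)))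
    rw [measure_congr (insert_ae_eq_self x (K \ U)), ← measure_sdiff_add_inter K hU.measurableSet]
    exact ENNReal.lt_add_right (measure_ne_top_of_subset sdiff_subset hK.measure_ne_top) hpos.ne'
  · have hpunctured : P (U \ {x}) < P K - b := by
      rw [measure_sdiff hxU (measurableSet_singleton x).nullMeasurableSet
        isCompact_singleton.measure_ne_top]
      exact ENNReal.sub_lt_of_lt_add (measure_mono hxU) (by rwa [add_comm])
    have hcover : K ⊆ insert x (K \ U) ∪ U \ {x} := by
      intro y hy
      simp only [mem_union, mem_insert_iff, Set.mem_sdiff, mem_singleton_iff]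
      tauto
    refine lt_of_add_lt_add_right (a := P K - b) ?_
    calc b + (P K - b) = P K := add_tsub_cancel_of_le hb.le
      _ ≤ P (insert x (K \ U)) + P (U \ {x}) := (measure_mono hcover).trans (measure_union_le _ _)
      _ < P (insert x (K \ U)) + (P K - b) := by gcongr; exact hK'.measure_ne_top

lemma exists_isCompact_subset_measure_lt_and_lt_of_measure_le [SecondCountableTopology X]
    [T1Space X] [OpensMeasurableSpace X] [NullSingletonClass m] [IsFiniteMeasureOnCompacts m]
    [IsFiniteMeasureOnCompacts P] [P.OuterRegular] [P.InnerRegularCompactLTTop]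
    (hA : MeasurableSet A) (hPA : P A ≠ ∞) (hr : r ≠ 0) (hmA : m A ≤ r) (hb : b < P A) :
    ∃ K ⊆ A, IsCompact K ∧ m K < r ∧ b < P K := by
  obtain ⟨K, hKA, hK, hbK⟩ := hA.exists_lt_isCompact_of_ne_top hPA hb
  have hmK : m K ≤ r := (measure_mono hKA).trans hmA
  rcases eq_or_ne (m K) 0 with h0 | h0
  · exact ⟨K, hKA, hK, h0 ▸ pos_iff_ne_zero.2 hr, hbK⟩
  · obtain ⟨K', hK'K, hK', hmK', hbK'⟩ :=
      exists_isCompact_subset_measure_lt_measure_and_lt hK h0 hbK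
    exact ⟨K', hK'K.trans hKA, hK', hmK'.trans_le hmK, hbK'⟩

lemma exists_continuous_lt_integral_sub_integral [RegularSpace X] [LocallyCompactSpace X]
    [OpensMeasurableSpace X] [m.OuterRegular] [N.OuterRegular]
    [IsFiniteMeasureOnCompacts P] (hK : IsCompact K) (hNK : N K = 0) (hmK : m K < r)
    {a : ℝ} (ha : a < P.real K) :
    ∃ U, IsOpen U ∧ m U < r ∧ ∃ f : C(X, ℝ), HasCompactSupport f ∧ (∀ x, f x ∈ Icc 0 1) ∧
      EqOn f 0 Uᶜ ∧ a < ∫ x, f x ∂P - ∫ x, f x ∂N := by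
  obtain ⟨U, hKU, hU, hmU⟩ := K.exists_isOpen_lt_of_lt r hmK
  obtain ⟨V, hKV, hV, hNV⟩ := K.exists_isOpen_lt_of_lt (μ := N) (ENNReal.ofReal (P.real K - a))
    (by simpa [hNK] using ha)
  obtain ⟨f, hfK, hf0, hfc, hf⟩ := exists_continuous_one_zero_of_isCompact hK
    (hU.inter hV).isClosed_compl (disjoint_compl_right_iff_subset.2 (subset_inter hKU hKV))
  refine ⟨U ∩ V, hU.inter hV, (measure_mono inter_subset_left).trans_lt hmU, f, hfc, hf, hf0, ?_⟩
  have hP : P.real K ≤ ∫ x, f x ∂P := by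
    refine ENNReal.toReal_le_of_le_ofReal (integral_nonneg fun x ↦ (hf x).1) ?_
    exact (f.continuous.integrable_of_hasCompactSupport hfc).measure_le_integral
      (ae_of_all _ fun x ↦ (hf x).1) fun x hx ↦ (hfK hx).ge
  have hN : ∫ x, f x ∂N < P.real K - a := by
    refine (ENNReal.ofReal_lt_ofReal_iff (sub_pos.2 ha)).1 ?_
    exact (integral_le_measure (fun x _ ↦ (hf x).2) fun x hx ↦ (hf0 hx).le).trans_lt
      ((measure_mono inter_subset_right).trans_lt hNV)
  linarith

theorem positive_part_semicontinuity_general [T2Space X] [LocallyCompactSpace X]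
    [SecondCountableTopology X] [BorelSpace X] {ι : Type*} {l : Filter ι} [NullSingletonClass m]
    [IsLocallyFiniteMeasure m] {σ : ι → SignedMeasure X} {μ : SignedMeasure X}
    (hvague : ∀ f : X → ℝ, Continuous f → HasCompactSupport f →
      Tendsto (fun i ↦ ∫ x, f x ∂(σ i).toJordanDecomposition.posPart -
          ∫ x, f x ∂(σ i).toJordanDecomposition.negPart) l
        (𝓝 (∫ x, f x ∂μ.toJordanDecomposition.posPart -
          ∫ x, f x ∂μ.toJordanDecomposition.negPart)))
    (hr : r ≠ 0) {c : ι → ℝ≥0∞}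
    (hdom : ∀ i, ∀ U, IsOpen U → m U < r → (σ i).toJordanDecomposition.posPart U ≤ c i)
    (hA : MeasurableSet A) (hmA : m A ≤ r) :
    μ.toJordanDecomposition.posPart A ≤ liminf c l := by
  refine le_of_forall_lt_imp_le_of_dense fun b hb ↦ ?_
  obtain ⟨S, hS, hPS, hNS⟩ := μ.toJordanDecomposition.mutuallySingular
  obtain ⟨K, hKA, hK, hmK, hbK⟩ := exists_isCompact_subset_measure_lt_and_lt_of_measure_le
    (hA.diff hS) (by finiteness) hr ((measure_mono sdiff_subset).trans hmA)
    (hb.trans_eq (measure_sdiff_null hPS).symm)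
  obtain ⟨U, hU, hmU, f, hfc, hf, hf0, hbf⟩ := exists_continuous_lt_integral_sub_integral hK
    (measure_mono_null (fun _ hx ↦ (hKA hx).2) hNS) hmK
    (ENNReal.toReal_strict_mono (by finiteness) hbK)
  refine le_liminf_of_le (h := ?_)
  filter_upwards [(hvague f f.continuous hfc).eventually (lt_mem_nhds hbf)] with i hi
  have hneg : 0 ≤ ∫ x, f x ∂(σ i).toJordanDecomposition.negPart :=
    integral_nonneg fun x ↦ (hf x).1
  calc b ≤ ENNReal.ofReal (∫ x, f x ∂(σ i).toJordanDecomposition.posPart) :=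
        (ENNReal.le_ofReal_iff_toReal_le hb.ne_top
          (by linarith [b.toReal_nonneg])).2 (by linarith)
    _ ≤ (σ i).toJordanDecomposition.posPart U :=
        integral_le_measure (fun x _ ↦ (hf x).2) fun x hx ↦ (hf0 hx).le
    _ ≤ c i := hdom i U hU hmU

/-- Proposition 4: lower semicontinuity of the ordering `⪯` under weak convergence.
If signed measures `μ_ν → μ` weakly, with uniformly bounded and uniformly tight total
variations, and the positive parts satisfy `μ_ν⁺(A) ≤ 2 w_ν(s)` whenever `Leb(A) ≤ 2s`,
for odd nondecreasing functions `w_ν` concave on `(0,∞)`, then the positive part of `μ`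
satisfies `μ⁺(A) ≤ 2 w(s)` whenever `Leb(A) ≤ 2s`, where `w(s) = liminf_ν w_ν(s)`. -/
theorem positive_part_semicontinuity
    (μseq : ℕ → SignedMeasure ℝ) (μ : SignedMeasure ℝ)
    (hbound : ∃ C : ℝ, ∀ n, (μseq n).totalVariation Set.univ ≤ ENNReal.ofReal C)
    (htight : ∀ ε > 0, ∃ K : Set ℝ, IsCompact K ∧
        ∀ n, (μseq n).totalVariation Kᶜ < ENNReal.ofReal ε)
    (hweak : ∀ f : ℝ → ℝ, Continuous f → (∃ C, ∀ x, |f x| ≤ C) →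
        Tendsto (fun n => signedIntegral (μseq n) f) atTop (𝓝 (signedIntegral μ f)))
    (wseq : ℕ → ℝ → ℝ)
    (hw_odd : ∀ n, ∀ s, wseq n (-s) = -(wseq n s))
    (hw_mono : ∀ n, Monotone (wseq n))
    (hw_concave : ∀ n, ConcaveOn ℝ (Set.Ioi 0) (wseq n))
    (hw_dom : ∀ n, ∀ s > 0, ∀ A : Set ℝ, MeasurableSet A →
        volume A ≤ ENNReal.ofReal (2 * s) →
        (μseq n).toJordanDecomposition.posPart A ≤ ENNReal.ofReal (2 * wseq n s)) :
    ∀ s > 0, ∀ A : Set ℝ, MeasurableSet A → volume A ≤ ENNReal.ofReal (2 * s) →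
      μ.toJordanDecomposition.posPart A ≤
        2 * Filter.liminf (fun n => ENNReal.ofReal (wseq n s)) atTop := by
  intro s hs A hA hvA
  have hle := positive_part_semicontinuity_general
    (fun f hf hfc ↦ hweak f hf (hfc.exists_bound_of_continuous hf))
    (ENNReal.ofReal_pos.2 (by positivity : 0 < 2 * s)).ne'
    (fun n U hU hvU ↦ hw_dom n s hs U hU.measurableSet hvU.le) hA hvA
  have hmul : 2 * liminf (fun n ↦ ENNReal.ofReal (wseq n s)) atTop =
      liminf (fun n ↦ 2 * ENNReal.ofReal (wseq n s)) atTop :=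
    (monotone_id.const_mul' 2).map_liminf_of_continuousAt _
      (ENNReal.continuous_const_mul ENNReal.ofNat_ne_top).continuousAt
  simpa only [ENNReal.ofReal_mul zero_le_two, ENNReal.ofReal_ofNat, hmul] using hle
end
end

section
/- Let μ be a finite positive Borel measure on ℝ. Then the function F : [0,∞) → [0,∞) defined by F(s) := sup{μ(A) : A ⊆ ℝ Borel, Leb(A) ≤ s} is nondecreasing and concave on [0,∞). (Equivalently, by formula (2.5), the odd rearrangement v̂ of μ is concave for x > 0 and convex for x < 0.) -/
/-!
Let `ν` be the Lebesgue measure, or any measure without atoms. Two competitors `A` and `B` are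
interpolated with weights `a + b = 1` by keeping `A ∩ B` and adding parts of `A \ B` and `B \ A`
that use at most the fractions `a` and `b` of their `ν`-measure but carry at least these fractions
of their `μ`-mass. Such parts exist by averaging: a measure-preserving map turns the normalized
restriction of `ν` into the uniform distribution on a circle of length one, and the mean mass of an
arc of length `a` is, by Tonelli, `a` times the total mass, so some arc carries at least this much.
-/

open MeasureTheory Set Filter
open scoped ENNReal

noncomputable section

open ProbabilityTheory
open scoped NNReal

section UniformDistribution

lemma continuous_cdf (ν : Measure ℝ) [IsProbabilityMeasure ν] [NullSingletonClass ν] :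
    Continuous (cdf ν) := by
  refine continuous_iff_continuousAt.2 fun x => ?_
  rw [(monotone_cdf ν).continuousAt_iff_leftLim_eq_rightLim, StieltjesFunction.rightLim_eq]
  have hjump : ENNReal.ofReal (cdf ν x - Function.leftLim (cdf ν) x) = 0 := by
    rw [← StieltjesFunction.measure_singleton, measure_cdf, measure_singleton]
  exact le_antisymm ((monotone_cdf ν).leftLim_le le_rfl)
    (sub_nonpos.1 (ENNReal.ofReal_eq_zero.1 hjump))

lemma Ioo_subset_range_cdf (ν : Measure ℝ) [IsProbabilityMeasure ν] [NullSingletonClass ν] :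
    Ioo 0 1 ⊆ range (cdf ν) := fun _ ht =>
  mem_range_of_exists_le_of_exists_ge (continuous_cdf ν)
    (((tendsto_cdf_atBot ν).eventually_le_const ht.1).exists)
    (((tendsto_cdf_atTop ν).eventually_const_le ht.2).exists)

lemma measure_preimage_cdf_Iic (ν : Measure ℝ) [IsProbabilityMeasure ν] [NullSingletonClass ν]
    {t : ℝ} (ht : t ∈ Icc 0 1) : ν (cdf ν ⁻¹' Iic t) = ENNReal.ofReal t := by
  apply le_antisymm
  · rcases ht.2.eq_or_lt with rfl | ht1
    · simpa using prob_le_one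
    have hle : ∀ u ∈ Ioo t 1, ν (cdf ν ⁻¹' Iic t) ≤ ENNReal.ofReal u := fun u hu => by
      obtain ⟨x, rfl⟩ := Ioo_subset_range_cdf ν ⟨ht.1.trans_lt hu.1, hu.2⟩
      rw [ofReal_cdf]
      exact measure_mono fun y hy => ((monotone_cdf ν).reflect_lt (hy.trans_lt hu.1)).le
    exact ge_of_tendsto
      ((ENNReal.continuous_ofReal.tendsto t).mono_left (nhdsWithin_le_nhds (s := Ioi t)))
      (mem_of_superset (Ioo_mem_nhdsGT ht1) hle)
  · rcases ht.1.eq_or_lt with rfl | ht0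
    · simp
    rcases ht.2.eq_or_lt with rfl | ht1
    · simp [preimage, cdf_le_one]
    obtain ⟨x, rfl⟩ := Ioo_subset_range_cdf ν ⟨ht0, ht1⟩
    rw [ofReal_cdf]
    exact measure_mono fun y hy => monotone_cdf ν hy

lemma measurePreserving_cdf (ν : Measure ℝ) [IsProbabilityMeasure ν] [NullSingletonClass ν] :
    MeasurePreserving (cdf ν) ν (volume.restrict (Ioc 0 1)) := by
  have hmeas : Measurable (cdf ν) := (monotone_cdf ν).measurable
  have := Measure.isProbabilityMeasure_map (μ := ν) hmeas.aemeasurable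
  refine ⟨hmeas, Measure.ext_of_Iic _ _ fun t => ?_⟩
  rw [Measure.map_apply hmeas measurableSet_Iic, Measure.restrict_apply measurableSet_Iic,
    inter_comm, Ioc_inter_Iic, Real.volume_Ioc, sub_zero]
  rcases lt_or_ge t 0 with ht0 | ht0
  · have hempty : cdf ν ⁻¹' Iic t = ∅ :=
      eq_empty_of_forall_notMem fun x hx => (ht0.trans_le (cdf_nonneg ν x)).not_ge hx
    rw [hempty, measure_empty, min_eq_right (by linarith), ENNReal.ofReal_of_nonpos ht0.le]
  rcases le_or_gt t 1 with ht1 | ht1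
  · rw [measure_preimage_cdf_Iic ν ⟨ht0, ht1⟩, min_eq_right ht1]
  · have huniv : cdf ν ⁻¹' Iic t = univ :=
      eq_univ_of_forall fun x => (cdf_le_one ν x).trans ht1.le
    simp [huniv, ht1.le]

variable {α : Type*} [MeasurableSpace α] [MeasurableSpace.CountablySeparated α]

lemma exists_measurePreserving_unitAddCircle (ν : Measure α) [IsProbabilityMeasure ν]
    [NullSingletonClass ν] : ∃ φ : α → UnitAddCircle, MeasurePreserving φ ν volume := by
  obtain ⟨g, hg, hg_inj⟩ := MeasurableSpace.measurable_injection_nat_bool_of_countablySeparated α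
  have he := measurableEmbedding_embeddingReal (ℕ → Bool)
  set f : α → ℝ := embeddingReal (ℕ → Bool) ∘ g
  have hf : Measurable f := he.measurable.comp hg
  have hf_inj : Function.Injective f := he.injective.comp hg_inj
  have := Measure.isProbabilityMeasure_map (μ := ν) hf.aemeasurable
  have : NullSingletonClass (ν.map f) := ⟨fun x => by
    rw [Measure.map_apply hf (measurableSet_singleton x)]
    exact (subsingleton_singleton.preimage hf_inj).measure_zero ν⟩
  have hmk := UnitAddCircle.measurePreserving_mk 0
  rw [zero_add] at hmk
  exact ⟨_, (hmk.comp (measurePreserving_cdf (ν.map f))).comp (hf.measurePreserving ν)⟩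

end UniformDistribution

section Averaging

lemma exists_mul_measure_univ_le_measure_closedBall {X : Type*} [PseudoMetricSpace X]
    [CompactSpace X] [MeasurableSpace X] [OpensMeasurableSpace X] (ν μ : Measure X)
    [IsProbabilityMeasure ν] {r : ℝ} (hr : 0 < r) {c : ℝ≥0∞}
    (hc : ∀ x, c ≤ ν (Metric.closedBall x r)) :
    ∃ x, c * μ univ ≤ μ (Metric.closedBall x r) := by
  by_cases hμ : ∃ x, μ (Metric.closedBall x r) = ∞
  · exact hμ.imp fun x hx => le_top.trans_eq hx.symm
  push Not at hμ
  -- Balls of finite mass make `μ` finite by compactness, so that Tonelli applies.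
  have : IsLocallyFiniteMeasure μ :=
    ⟨fun x => ⟨_, Metric.closedBall_mem_nhds x hr, (hμ x).lt_top⟩⟩
  have hS : MeasurableSet {p : X × X | dist p.2 p.1 ≤ r} :=
    measurableSet_le (measurable_snd.dist measurable_fst) measurable_const
  have tonelli : ∫⁻ x, μ (Metric.closedBall x r) ∂ν = ∫⁻ y, ν (Metric.closedBall y r) ∂μ := by
    refine (Measure.prod_apply (μ := ν) (ν := μ) hS).symm.trans
      ((Measure.prod_apply_symm hS).trans (lintegral_congr fun y => congrArg ν ?_))
    ext x
    simp [dist_comm]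
  have hfin : ∫⁻ x, μ (Metric.closedBall x r) ∂ν ≠ ∞ := by
    refine ne_top_of_le_ne_top (measure_ne_top μ univ) ?_
    calc ∫⁻ x, μ (Metric.closedBall x r) ∂ν ≤ ∫⁻ _, μ univ ∂ν :=
          lintegral_mono fun _ => measure_mono (subset_univ _)
      _ = μ univ := by simp
  obtain ⟨x, hx⟩ := exists_lintegral_le hfin
  refine ⟨x, le_trans ?_ hx⟩
  calc c * μ univ = ∫⁻ _, c ∂μ := (lintegral_const c).symm
    _ ≤ ∫⁻ y, ν (Metric.closedBall y r) ∂μ := lintegral_mono hc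
    _ = ∫⁻ x, μ (Metric.closedBall x r) ∂ν := tonelli.symm

variable {α : Type*} [MeasurableSpace α] [MeasurableSpace.CountablySeparated α]

lemma exists_measure_eq_and_smul_measure_univ_le (ν μ : Measure α) [IsProbabilityMeasure ν]
    [NullSingletonClass ν] {a : ℝ≥0} (ha : a ≤ 1) :
    ∃ E, MeasurableSet E ∧ ν E = a ∧ a • μ univ ≤ μ E := by
  rcases eq_zero_or_pos a with rfl | ha0
  · exact ⟨∅, by simp⟩
  obtain ⟨φ, hφ⟩ := exists_measurePreserving_unitAddCircle ν
  have : IsProbabilityMeasure (volume : Measure UnitAddCircle) := ⟨UnitAddCircle.measure_univ⟩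
  have harc (x : UnitAddCircle) : volume (Metric.closedBall x (a / 2 : ℝ)) = a := by
    rw [AddCircle.volume_closedBall, mul_div_cancel₀ _ two_ne_zero,
      min_eq_right (NNReal.coe_le_one.2 ha), ENNReal.ofReal_coe_nnreal]
  obtain ⟨x, hx⟩ := exists_mul_measure_univ_le_measure_closedBall volume (μ.map φ)
    (half_pos (NNReal.coe_pos.2 ha0)) fun x => (harc x).ge
  have hball : MeasurableSet (Metric.closedBall x (a / 2 : ℝ)) :=
    Metric.isClosed_closedBall.measurableSet
  refine ⟨φ ⁻¹' Metric.closedBall x (a / 2), hφ.measurable hball, ?_, ?_⟩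
  · rw [hφ.measure_preimage hball.nullMeasurableSet, harc]
  · rwa [Measure.map_apply hφ.measurable .univ, Measure.map_apply hφ.measurable hball] at hx

lemma exists_subset_measure_le_smul_and_smul_measure_le (ν μ : Measure α) [NullSingletonClass ν]
    {D : Set α} (hD : MeasurableSet D) {a : ℝ≥0} (ha : a ≤ 1) :
    ∃ E ⊆ D, MeasurableSet E ∧ ν E ≤ a • ν D ∧ a • μ D ≤ μ E := by
  rcases eq_zero_or_pos a with rfl | ha0
  · exact ⟨∅, by simp⟩
  have hμ : a • μ D ≤ μ D := mul_le_of_le_one_left' (ENNReal.coe_le_one_iff.2 ha)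
  by_cases h0 : ν D = 0
  · exact ⟨D, Subset.rfl, hD, by simp [h0], hμ⟩
  by_cases htop : ν D = ∞
  · exact ⟨D, Subset.rfl, hD, by simp [htop, ENNReal.smul_def, ENNReal.mul_top, ha0.ne'], hμ⟩
  have : IsProbabilityMeasure ν[|D] := cond_isProbabilityMeasure_of_finite h0 htop
  have : NullSingletonClass ν[|D] :=
    ⟨fun x => cond_absolutelyContinuous (measure_singleton x)⟩
  obtain ⟨E, hE, hνE, hμE⟩ := exists_measure_eq_and_smul_measure_univ_le ν[|D] (μ.restrict D) ha
  refine ⟨D ∩ E, inter_subset_left, hD.inter hE, ?_, ?_⟩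
  · rw [ENNReal.smul_def, ← hνE, smul_eq_mul, cond_mul_eq_inter' hD htop]
  · rwa [Measure.restrict_apply_univ, Measure.restrict_apply hE, inter_comm] at hμE

end Averaging

lemma smul_measure_add_smul_measure_eq {α : Type*} [MeasurableSpace α] (ν : Measure α)
    {A B : Set α} (hA : MeasurableSet A) (hB : MeasurableSet B) {a b : ℝ≥0} (hab : a + b = 1) :
    a • ν A + b • ν B = ν (A ∩ B) + a • ν (A \ B) + b • ν (B \ A) := by
  calc a • ν A + b • ν B
      = a • (ν (A ∩ B) + ν (A \ B)) + b • (ν (A ∩ B) + ν (B \ A)) := by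
        rw [measure_inter_add_sdiff A hB, inter_comm A B, measure_inter_add_sdiff B hA]
    _ = (a + b) • ν (A ∩ B) + a • ν (A \ B) + b • ν (B \ A) := by
        simp only [smul_add, add_smul]; abel
    _ = ν (A ∩ B) + a • ν (A \ B) + b • ν (B \ A) := by rw [hab, one_smul]

/-- The largest mass that `μ` gives to a measurable set of `ν`-measure at most `s`; `waveSup` is
the case where `ν` is the Lebesgue measure. The budget `s` may be infinite. -/
def massSup {α : Type*} [MeasurableSpace α] (ν μ : Measure α) (s : ℝ≥0∞) : ℝ≥0∞ :=
  ⨆ (A : Set α) (_ : MeasurableSet A) (_ : ν A ≤ s), μ A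

section MassSup

variable {α : Type*} [MeasurableSpace α]

lemma measure_le_massSup {ν μ : Measure α} {s : ℝ≥0∞} {A : Set α} (hA : MeasurableSet A)
    (hs : ν A ≤ s) : μ A ≤ massSup ν μ s :=
  le_iSup₂_of_le A hA (le_iSup_of_le hs le_rfl)

lemma massSup_ne_top (ν μ : Measure α) [IsFiniteMeasure μ] (s : ℝ≥0∞) : massSup ν μ s ≠ ∞ :=
  ne_top_of_le_ne_top (measure_ne_top μ univ)
    (iSup₂_le fun A _ => iSup_le fun _ => measure_mono (subset_univ A))

lemma monotone_massSup (ν μ : Measure α) : Monotone (massSup ν μ) := fun _ _ hst =>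
  iSup₂_le fun _ hA => iSup_le fun hs => measure_le_massSup hA (hs.trans hst)

variable [MeasurableSpace.CountablySeparated α] (ν μ : Measure α) [NullSingletonClass ν]

lemma smul_measure_add_smul_measure_le_massSup {A B : Set α} (hA : MeasurableSet A)
    (hB : MeasurableSet B) {a b : ℝ≥0} (hab : a + b = 1) :
    a • μ A + b • μ B ≤ massSup ν μ (a • ν A + b • ν B) := by
  obtain ⟨E, hEA, hE, hνE, hμE⟩ := exists_subset_measure_le_smul_and_smul_measure_le ν μ
    (hA.diff hB) (hab ▸ le_self_add : a ≤ 1)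
  obtain ⟨G, hGB, hG, hνG, hμG⟩ := exists_subset_measure_le_smul_and_smul_measure_le ν μ
    (hB.diff hA) (hab ▸ le_add_self : b ≤ 1)
  have hunion (m : Measure α) : m (A ∩ B ∪ E ∪ G) = m (A ∩ B) + m E + m G := by
    rw [measure_union _ hG, measure_union _ hE]
    · exact disjoint_left.2 fun x hx hxE => (hEA hxE).2 hx.2
    · exact disjoint_left.2 fun x hx hxG => (hGB hxG).2 (hx.elim And.left fun h => (hEA h).1)
  calc a • μ A + b • μ B ≤ μ (A ∩ B ∪ E ∪ G) := by
        rw [smul_measure_add_smul_measure_eq μ hA hB hab, hunion]; gcongr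
    _ ≤ massSup ν μ (a • ν A + b • ν B) := by
        refine measure_le_massSup (((hA.inter hB).union hE).union hG) ?_
        rw [smul_measure_add_smul_measure_eq ν hA hB hab, hunion]; gcongr

lemma concaveOn_massSup : ConcaveOn ℝ≥0 univ (massSup ν μ) := by
  refine ⟨convex_univ, fun s _ t _ a b _ _ hab => ?_⟩
  have hempty (r : ℝ≥0∞) : ∃ A, MeasurableSet A ∧ ν A ≤ r := ⟨∅, by simp⟩
  simp only [ENNReal.smul_def, smul_eq_mul]
  rw [massSup, massSup]
  simp only [iSup_and', ENNReal.mul_iSup]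
  refine ENNReal.biSup_add_biSup_le' (hempty s) (hempty t) fun A hA B hB => ?_
  exact (smul_measure_add_smul_measure_le_massSup ν μ hA.1 hB.1 hab).trans
    (monotone_massSup ν μ (add_le_add (mul_le_mul_right hA.2 _) (mul_le_mul_right hB.2 _)))

end MassSup

lemma concaveOn_toReal_comp_ofReal {f : ℝ≥0∞ → ℝ≥0∞} (hf : ConcaveOn ℝ≥0 univ f)
    (hfin : ∀ s ≠ ∞, f s ≠ ∞) : ConcaveOn ℝ (Ici 0) fun s => (f (ENNReal.ofReal s)).toReal := by
  refine ⟨convex_Ici 0, fun s hs t ht a b ha hb hab => ?_⟩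
  lift s to ℝ≥0 using hs
  lift t to ℝ≥0 using ht
  lift a to ℝ≥0 using ha
  lift b to ℝ≥0 using hb
  have hcast : ENNReal.ofReal (a • (s : ℝ) + b • (t : ℝ)) = a • (s : ℝ≥0∞) + b • (t : ℝ≥0∞) := by
    rw [ENNReal.ofReal_add (by positivity) (by positivity)]
    simp [NNReal.smul_def, ENNReal.smul_def, ENNReal.ofReal_mul]
  have hne_top (c r : ℝ≥0) : c • f r ≠ ∞ :=
    ENNReal.mul_ne_top ENNReal.coe_ne_top (hfin r ENNReal.coe_ne_top)
  calc a • (f (ENNReal.ofReal s)).toReal + b • (f (ENNReal.ofReal t)).toReal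
      = (a • f s + b • f t).toReal := by
        rw [ENNReal.ofReal_coe_nnreal, ENNReal.ofReal_coe_nnreal,
          ENNReal.toReal_add (hne_top a s) (hne_top b t), ENNReal.toReal_smul, ENNReal.toReal_smul]
    _ ≤ (f (a • (s : ℝ≥0∞) + b • (t : ℝ≥0∞))).toReal :=
        ENNReal.toReal_mono (hfin _ (hcast ▸ ENNReal.ofReal_ne_top))
          (hf.2 (mem_univ _) (mem_univ _) zero_le zero_le (mod_cast hab))
    _ = (f (ENNReal.ofReal (a • (s : ℝ) + b • (t : ℝ)))).toReal := by rw [hcast]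

theorem waveSup_monotone_concave_general {α : Type*} [MeasurableSpace α]
    [MeasurableSpace.CountablySeparated α] (ν μ : Measure α) [NullSingletonClass ν] :
    Monotone (massSup ν μ) ∧ ConcaveOn ℝ≥0 univ (massSup ν μ) :=
  ⟨monotone_massSup ν μ, concaveOn_massSup ν μ⟩

/-- For a finite positive measure `μ` on `ℝ`, the function
`F(s) = sup { μ(A) : Leb(A) ≤ s }` is nondecreasing and concave on `[0,∞)`. -/
theorem waveSup_monotone_concave
    (μ : Measure ℝ) [IsFiniteMeasure μ] :
    MonotoneOn (fun s => (waveSup μ s).toReal) (Set.Ici (0:ℝ)) ∧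
      ConcaveOn ℝ (Set.Ici (0:ℝ)) (fun s => (waveSup μ s).toReal) := by
  have ⟨hmono, hconc⟩ := waveSup_monotone_concave_general volume μ
  exact ⟨fun _ _ t _ hst => ENNReal.toReal_mono (massSup_ne_top volume μ (ENNReal.ofReal t))
      (hmono (ENNReal.ofReal_le_ofReal hst)),
    concaveOn_toReal_comp_ofReal hconc fun s _ => massSup_ne_top volume μ s⟩
end
end

section
/- Let w : ℝ → ℝ be a bounded odd nondecreasing function that is concave (hence continuous) on (0,∞), and let ν be the Lebesgue–Stieltjes measure of the right-continuous modification of w, so that ν({0}) = 2·w(0+) where w(0+) is the right limit of w at 0. Then for every s > 0, sup{ν(B) : B ⊆ ℝ Borel, Leb(B) ≤ 2s} = 2·w(s). -/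
open MeasureTheory Set Filter Function
open scoped ENNReal

noncomputable section

/-!
Let `c` be the slope of a supporting line of `w` at `s`, and `φ x = w x - c * x`. By concavity and
oddness `φ` increases on `[-s, s]` and decreases outside. Freezing `φ` outside `[-s, s]` gives a
nondecreasing function `u` with total increment `φ s - φ (-s) = 2 * w s - 2 * c * s`, and
`c * x + u x - w x = u x - φ x` is nondecreasing. Hence `ν ≤ c • Leb + du`, so that
`ν B ≤ c * (2 * s) + (2 * w s - 2 * c * s) = 2 * w s` whenever `Leb B ≤ 2 * s`; the interval
`[-s, s]` attains the bound.
-/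

open scoped NNReal Topology

section StieltjesMeasure

variable {R : Type*} [LinearOrder R] [TopologicalSpace R] [OrderTopology R]

theorem stieltjesFunction_add {f g : R → ℝ} (hf : Monotone f) (hg : Monotone g) :
    (hf.add hg).stieltjesFunction = hf.stieltjesFunction + hg.stieltjesFunction := by
  ext x
  simp only [StieltjesFunction.add_apply, Monotone.stieltjesFunction_eq]
  rcases eq_or_neBot (𝓝[>] x) with hx | hx
  · simp only [rightLim_eq_of_eq_bot _ hx]
  · exact rightLim_eq_of_tendsto ((hf.tendsto_rightLim x).add (hg.tendsto_rightLim x))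

theorem stieltjesFunction_mem_Icc {u : R → ℝ} (hu : Monotone u) {a b : ℝ}
    (hab : ∀ x, u x ∈ Icc a b) (x : R) : hu.stieltjesFunction x ∈ Icc a b := by
  rw [Monotone.stieltjesFunction_eq]
  rcases eq_or_neBot (𝓝[>] x) with hx | hx
  · exact rightLim_eq_of_eq_bot u hx ▸ hab x
  · exact isClosed_Icc.mem_of_tendsto (hu.tendsto_rightLim x) (Eventually.of_forall hab)

theorem stieltjesFunction_of_mono (f : StieltjesFunction R) : f.mono.stieltjesFunction = f := by
  ext x
  rw [Monotone.stieltjesFunction_eq, f.rightLim_eq]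

variable [CompactIccSpace R] [MeasurableSpace R] [BorelSpace R] [SecondCountableTopology R]
  [DenselyOrdered R]

theorem stieltjes_measure_le_of_monotone_sub {f g : R → ℝ} (hf : Monotone f) (hg : Monotone g)
    (hfg : Monotone fun x => g x - f x) :
    hf.stieltjesFunction.measure ≤ hg.stieltjesFunction.measure := by
  have hsum : hg.stieltjesFunction = hf.stieltjesFunction + hfg.stieltjesFunction := by
    rw [← stieltjesFunction_add]
    congr with x
    simp
  rw [hsum, StieltjesFunction.measure_add]
  exact Measure.le_add_right le_rfl

theorem stieltjes_measure_univ_le [Nonempty R] (f : StieltjesFunction R) {a b : ℝ}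
    (hf : ∀ x, f x ∈ Icc a b) : f.measure univ ≤ ENNReal.ofReal (b - a) := by
  have hbot := tendsto_atBot_ciInf f.mono ⟨a, forall_mem_range.2 fun x => (hf x).1⟩
  have htop := tendsto_atTop_ciSup f.mono ⟨b, forall_mem_range.2 fun x => (hf x).2⟩
  rw [f.measure_univ hbot htop]
  gcongr
  · exact ciSup_le fun x => (hf x).2
  · exact le_ciInf fun x => (hf x).1

theorem ofReal_sub_le_stieltjes_measure_Icc [NoMinOrder R] {g : R → ℝ} (hg : Monotone g)
    (a b : R) : ENNReal.ofReal (g b - g a) ≤ hg.stieltjesFunction.measure (Icc a b) := by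
  have hleft : leftLim hg.stieltjesFunction a = leftLim g a :=
    leftLim_rightLim (hg.tendsto_leftLim a)
  rw [StieltjesFunction.measure_Icc, hleft, hg.stieltjesFunction_eq]
  gcongr
  · exact hg.le_rightLim le_rfl
  · exact hg.leftLim_le le_rfl

end StieltjesMeasure

section FrozenOutsideInterval

variable {R : Type*} [LinearOrder R] {p q : R}

theorem exists_monotone_mem_Icc_monotone_sub {φ : R → ℝ} (hpq : p ≤ q)
    (hleft : AntitoneOn φ (Iic p)) (hmid : MonotoneOn φ (Icc p q)) (hright : AntitoneOn φ (Ici q)) :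
    ∃ u : R → ℝ, Monotone u ∧ (∀ x, u x ∈ Icc (φ p) (φ q)) ∧ Monotone fun x => u x - φ x := by
  have hproj : ∀ x, (projIcc p q hpq x : R) ∈ Icc p q := fun x => (projIcc p q hpq x).2
  have hsub : ∀ x, φ (projIcc p q hpq x) - φ x =
      (φ p - φ (min x p)) + (φ q - φ (max x q)) := fun x => by
    rcases le_total x p with hxp | hpx
    · simp [projIcc_of_le_left hpq hxp, hxp, hxp.trans hpq]
    · rcases le_total x q with hxq | hqx
      · simp [projIcc_of_mem hpq ⟨hpx, hxq⟩, hpx, hxq]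
      · simp [projIcc_of_right_le hpq hqx, hpx, hqx]
  refine ⟨fun x => φ (projIcc p q hpq x),
    fun x y hxy => hmid (hproj x) (hproj y) (monotone_projIcc hpq hxy),
    fun x => ⟨hmid (left_mem_Icc.2 hpq) (hproj x) (hproj x).1,
      hmid (hproj x) (right_mem_Icc.2 hpq) (hproj x).2⟩, fun x y hxy => ?_⟩
  have hmin := hleft (min_le_right x p) (min_le_right y p) (min_le_min_right p hxy)
  have hmax := hright (le_max_right x q) (le_max_right y q) (max_le_max_right q hxy)
  simp only [hsub]
  linarith

variable [TopologicalSpace R] [OrderTopology R] [CompactIccSpace R] [MeasurableSpace R]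
  [BorelSpace R] [SecondCountableTopology R] [DenselyOrdered R]

theorem stieltjes_measure_le_measure_add_ofReal (f : StieltjesFunction R) {g : R → ℝ}
    (hg : Monotone g) (hpq : p ≤ q) (hleft : AntitoneOn (fun x => g x - f x) (Iic p))
    (hmid : MonotoneOn (fun x => g x - f x) (Icc p q))
    (hright : AntitoneOn (fun x => g x - f x) (Ici q)) (B : Set R) :
    hg.stieltjesFunction.measure B ≤
      f.measure B + ENNReal.ofReal ((g q - f q) - (g p - f p)) := by
  have : Nonempty R := ⟨p⟩
  obtain ⟨u, hu, hu_mem, hu_sub⟩ := exists_monotone_mem_Icc_monotone_sub hpq hleft hmid hright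
  have hfu : Monotone (⇑f + u) := f.mono.add hu
  have hsub : Monotone fun x => (⇑f + u) x - g x := by
    convert hu_sub using 2 with x
    rw [Pi.add_apply]
    ring
  calc hg.stieltjesFunction.measure B
      ≤ hfu.stieltjesFunction.measure B := stieltjes_measure_le_of_monotone_sub hg hfu hsub B
    _ = f.measure B + hu.stieltjesFunction.measure B := by
        rw [stieltjesFunction_add f.mono hu, stieltjesFunction_of_mono,
          StieltjesFunction.measure_add, Measure.add_apply]
    _ ≤ f.measure B + hu.stieltjesFunction.measure univ := by
        gcongr
        exact subset_univ B
    _ ≤ f.measure B + ENNReal.ofReal ((g q - f q) - (g p - f p)) := by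
        gcongr
        exact stieltjes_measure_univ_le _ (stieltjesFunction_mem_Icc hu hu_mem)

end FrozenOutsideInterval

section Concave

variable {S : Set ℝ} {f : ℝ → ℝ} {s : ℝ}

theorem concaveOn_sub_mul (hf : ConcaveOn ℝ S f) (c : ℝ) : ConcaveOn ℝ S fun x => f x - c * x :=
  hf.sub ((LinearMap.mulLeft ℝ c).convexOn hf.1)

theorem exists_isMaxOn_sub_mul_of_concaveOn (hf : ConcaveOn ℝ S f) (hs : s ∈ interior S) :
    ∃ c : ℝ, IsMaxOn (fun x => f x - c * x) S s := by
  have hderiv := hf.neg.hasDerivWithinAt_rightDeriv_of_mem_interior hs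
  set d := derivWithin (-f) (Ioi s) s
  refine ⟨-d, ?_⟩
  have hfun : (-fun x => f x - -d * x) = -f - fun x => d * id x := by
    ext x
    simp only [Pi.neg_apply, Pi.sub_apply, id_eq]
    ring
  have hzero : HasDerivWithinAt (-fun x => f x - -d * x) 0 (Ioi s) s := by
    rw [hfun]
    simpa using hderiv.sub ((hasDerivWithinAt_id s (Ioi s)).const_mul d)
  have hmin := (concaveOn_sub_mul hf (-d)).neg.isMinOn_of_rightDeriv_eq_zero hs
    (hzero.derivWithin (uniqueDiffWithinAt_Ioi s))
  simpa using hmin.neg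

theorem monotoneOn_inter_Iic_of_isMaxOn (hf : ConcaveOn ℝ S f) (hs : s ∈ S)
    (hmax : IsMaxOn f S s) : MonotoneOn f (S ∩ Iic s) := by
  rintro x ⟨hx, -⟩ y ⟨hy, hys⟩ hxy
  rcases (mem_Iic.1 hys).eq_or_lt with rfl | hys
  · exact hmax hx
  · exact hf.left_le_of_le_right'' hx hs hxy hys (hmax hy)

theorem antitoneOn_inter_Ici_of_isMaxOn (hf : ConcaveOn ℝ S f) (hs : s ∈ S)
    (hmax : IsMaxOn f S s) : AntitoneOn f (S ∩ Ici s) := by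
  rintro x ⟨hx, hsx⟩ y ⟨hy, -⟩ hxy
  rcases (mem_Ici.1 hsx).eq_or_lt with rfl | hsx
  · exact hmax hy
  · exact hf.right_le_of_le_left'' hs hy hsx hxy (hmax hx)

theorem exists_monotoneOn_antitoneOn_sub_mul (hf : ConcaveOn ℝ S f) (hs : s ∈ interior S) :
    ∃ c : ℝ, MonotoneOn (fun x => f x - c * x) (S ∩ Iic s) ∧
      AntitoneOn (fun x => f x - c * x) (S ∩ Ici s) := by
  obtain ⟨c, hmax⟩ := exists_isMaxOn_sub_mul_of_concaveOn hf hs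
  exact ⟨c, monotoneOn_inter_Iic_of_isMaxOn (concaveOn_sub_mul hf c) (interior_subset hs) hmax,
    antitoneOn_inter_Ici_of_isMaxOn (concaveOn_sub_mul hf c) (interior_subset hs) hmax⟩

end Concave

theorem monotoneOn_Icc_sub_of_continuousWithinAt {f g : ℝ → ℝ} {a b : ℝ}
    (hf : ContinuousWithinAt f (Ioi a) a) (hg : MonotoneOn g (Icc a b))
    (h : MonotoneOn (fun x => g x - f x) (Ioc a b)) :
    MonotoneOn (fun x => g x - f x) (Icc a b) := by
  intro x hx y hy hxy
  rcases hx.1.eq_or_lt with rfl | hax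
  · rcases hxy.eq_or_lt with rfl | hay
    · exact le_rfl
    suffices g a ≤ (g y - f y) + f a by linarith
    refine ge_of_tendsto (hf.tendsto.const_add (g y - f y)) ?_
    filter_upwards [Ioo_mem_nhdsGT hay] with t ht
    have hg_at := hg hx ⟨ht.1.le, ht.2.le.trans hy.2⟩ ht.1.le
    have hφ_ty := h ⟨ht.1, ht.2.le.trans hy.2⟩ ⟨hay, hy.2⟩ ht.2.le
    linarith
  · exact h ⟨hax, hx.2⟩ ⟨hax.trans_le hxy, hy.2⟩ hxy

section Odd

variable {G H : Type*} [AddCommGroup G] [LinearOrder G] [IsOrderedAddMonoid G]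
  [AddCommGroup H] [PartialOrder H] [IsOrderedAddMonoid H] {f : G → H} {s : G}

theorem monotoneOn_Icc_neg_of_odd (hodd : ∀ x, f (-x) = -f x) (h : MonotoneOn f (Icc 0 s)) :
    MonotoneOn f (Icc (-s) s) := by
  have hneg : MonotoneOn f (Icc (-s) 0) := fun x hx y hy hxy => by
    have hle := h ⟨neg_nonneg.2 hy.2, neg_le.1 hy.1⟩ ⟨neg_nonneg.2 hx.2, neg_le.1 hx.1⟩
      (neg_le_neg hxy)
    rwa [hodd, hodd, neg_le_neg_iff] at hle
  rcases lt_or_ge s 0 with hs | hs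
  · rw [Icc_eq_empty (hs.trans (neg_pos.2 hs)).not_ge]
    exact fun x hx => hx.elim
  · rw [← Icc_union_Icc_eq_Icc (neg_nonpos.2 hs) hs]
    exact hneg.union_right h (isGreatest_Icc (neg_nonpos.2 hs)) (isLeast_Icc hs)

theorem antitoneOn_Iic_neg_of_odd (hodd : ∀ x, f (-x) = -f x) (h : AntitoneOn f (Ici s)) :
    AntitoneOn f (Iic (-s)) := fun x hx y hy hxy => by
  have hneg := h (le_neg.2 hy) (le_neg.2 hx) (neg_le_neg hxy)
  rwa [hodd, hodd, neg_le_neg_iff] at hneg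

end Odd

theorem exists_slope_monotoneOn_antitoneOn_of_odd {w : ℝ → ℝ} (hmono : Monotone w)
    (hodd : ∀ x, w (-x) = -w x) (hconc : ConcaveOn ℝ (Ioi 0) w) {s : ℝ} (hs : 0 < s) :
    ∃ c : ℝ≥0, AntitoneOn (fun x => w x - c * x) (Iic (-s)) ∧
      MonotoneOn (fun x => w x - c * x) (Icc (-s) s) ∧
      AntitoneOn (fun x => w x - c * x) (Ici s) := by
  obtain ⟨c, hinc, hdec⟩ := exists_monotoneOn_antitoneOn_sub_mul hconc
    (show s ∈ interior (Ioi 0) by rwa [interior_Ioi])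
  rw [Ioi_inter_Iic] at hinc
  rw [inter_eq_right.2 (Ici_subset_Ioi.2 hs)] at hdec
  have hc : 0 ≤ c := by
    have hφ := hdec self_mem_Ici (mem_Ici.2 (lt_add_one s).le) (lt_add_one s).le
    have hw := hmono (lt_add_one s).le
    linarith
  have hφ_odd : ∀ x, w (-x) - c * -x = -(w x - c * x) := fun x => by
    rw [hodd]
    ring
  have hinc_Icc : MonotoneOn (fun x => w x - c * x) (Icc 0 s) :=
    monotoneOn_Icc_sub_of_continuousWithinAt (by fun_prop) (hmono.monotoneOn _) hinc
  exact ⟨⟨c, hc⟩, antitoneOn_Iic_neg_of_odd hφ_odd hdec,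
    monotoneOn_Icc_neg_of_odd hφ_odd hinc_Icc, hdec⟩

theorem waveSup_stieltjes_eq_ofReal_sub {g : ℝ → ℝ} (hg : Monotone g) {p q : ℝ} (hpq : p ≤ q)
    {c : ℝ≥0} (hleft : AntitoneOn (fun x => g x - c * x) (Iic p))
    (hmid : MonotoneOn (fun x => g x - c * x) (Icc p q))
    (hright : AntitoneOn (fun x => g x - c * x) (Ici q)) :
    waveSup hg.stieltjesFunction.measure (q - p) = ENNReal.ofReal (g q - g p) := by
  have hincr : 0 ≤ (g q - c * q) - (g p - c * p) :=
    sub_nonneg.2 (hmid (left_mem_Icc.2 hpq) (right_mem_Icc.2 hpq) hpq)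
  refine le_antisymm (iSup_le fun B => iSup_le fun _ => iSup_le fun hB => ?_) ?_
  · calc hg.stieltjesFunction.measure B
        ≤ (c • StieltjesFunction.id).measure B +
            ENNReal.ofReal ((g q - c * q) - (g p - c * p)) :=
          stieltjes_measure_le_measure_add_ofReal (c • StieltjesFunction.id) hg hpq
            hleft hmid hright B
      _ = c * volume B + ENNReal.ofReal ((g q - c * q) - (g p - c * p)) := by
          rw [StieltjesFunction.measure_smul, ← Real.volume_eq_stieltjes_id, Measure.smul_apply,
            ENNReal.smul_def, smul_eq_mul]
      _ ≤ c * ENNReal.ofReal (q - p) + ENNReal.ofReal ((g q - c * q) - (g p - c * p)) := by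
          gcongr
      _ = ENNReal.ofReal (g q - g p) := by
          rw [← ENNReal.ofReal_coe_nnreal, ← ENNReal.ofReal_mul c.coe_nonneg,
            ← ENNReal.ofReal_add (mul_nonneg c.coe_nonneg (sub_nonneg.2 hpq)) hincr]
          ring_nf
  · exact (ofReal_sub_le_stieltjes_measure_Icc hg p q).trans <|
      le_iSup_of_le (Icc p q) <| le_iSup_of_le measurableSet_Icc <|
        le_iSup_of_le Real.volume_Icc.le le_rfl

theorem waveSup_stieltjes_of_odd_concave_general {w : ℝ → ℝ} (hmono : Monotone w)
    (hodd : ∀ x, w (-x) = -w x) (hconc : ConcaveOn ℝ (Ioi 0) w) {s : ℝ} (hs : 0 < s) :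
    waveSup hmono.stieltjesFunction.measure (2 * s) = ENNReal.ofReal (2 * w s) := by
  obtain ⟨c, hleft, hmid, hright⟩ :=
    exists_slope_monotoneOn_antitoneOn_of_odd hmono hodd hconc hs
  have h := waveSup_stieltjes_eq_ofReal_sub hmono (neg_le_self hs.le) hleft hmid hright
  rwa [hodd, sub_neg_eq_add, sub_neg_eq_add, ← two_mul, ← two_mul] at h

/-- For a bounded odd nondecreasing function `w`, concave on `(0,∞)`, with
Lebesgue–Stieltjes measure `ν` of its right-continuous modification (so that
`ν({0}) = 2 w(0+)`), one has `sup { ν(B) : Leb(B) ≤ 2s } = 2 w(s)` for every `s > 0`. -/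
theorem waveSup_stieltjes_of_odd_concave
    (w : ℝ → ℝ) (hw_bdd : ∃ M, ∀ x, |w x| ≤ M)
    (hw_mono : Monotone w) (hw_odd : ∀ x, w (-x) = -w x)
    (hw_concave : ConcaveOn ℝ (Set.Ioi 0) w)
    (hν0 : hw_mono.stieltjesFunction.measure {0}
        = ENNReal.ofReal (2 * Function.rightLim w 0)) :
    ∀ s > 0, waveSup hw_mono.stieltjesFunction.measure (2 * s)
        = ENNReal.ofReal (2 * w s) := fun _ hs =>
  waveSup_stieltjes_of_odd_concave_general hw_mono hw_odd hw_concave hs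
end
end
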